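/- arXiv:1905.02288 — 2 statements merged into one kernel-verified Lean document; each statement's English description precedes it below -/
import Mathlib

section
/- Kouchnirenko–Bernstein theorem (equality case, two variables): for quasi-convenient coprime f, g ∈ ℂ[X,Y], the sum Σ_{P∈ℂ²} (f,g)_P equals ν∞(f,g) if and only if the pair (f,g) is nondegenerate at infinity, i.e. for every w = [p,q] with p > 0 or q > 0, init(f,w) and init(g,w) have no common zero in (ℂ*)². -/
open MvPolynomial MeasureTheory Pointwise

noncomputable section

/-- Polynomials in two complex variables. -/
abbrev P2 := MvPolynomial (Fin 2) ℂ

/-- The `w`-weight of a monomial exponent. -/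
def wt (w : ℝ × ℝ) (m : Fin 2 →₀ ℕ) : ℝ := w.1 * (m 0 : ℝ) + w.2 * (m 1 : ℝ)

/-- `d_w(f)`: maximal `w`-weight of a monomial of `f`. -/
def dw (w : ℝ × ℝ) (f : P2) : ℝ := sSup (wt w '' (f.support : Set (Fin 2 →₀ ℕ)))

open Classical in
/-- The initial form `init(f, w)`: sum of the monomials of `f` of maximal `w`-weight. -/
def initForm (w : ℝ × ℝ) (f : P2) : P2 :=
  ∑ m ∈ f.support, if wt w m = dw w f then monomial m (f.coeff m) else 0

/-- `f` is quasi-convenient: some pure power of `X` and some pure power of `Y`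
occur in `f` with nonzero coefficient. -/
def QuasiConvenient (f : P2) : Prop :=
  (∃ a : ℕ, f.coeff (Finsupp.single 0 a) ≠ 0) ∧
  (∃ b : ℕ, f.coeff (Finsupp.single 1 b) ≠ 0)

/-- The Newton diagram at infinity `Δ∞(f)`. -/
def newton (f : P2) : Set (ℝ × ℝ) :=
  convexHull ℝ ({(0, 0)} ∪ {p : ℝ × ℝ | ∃ m ∈ f.support, p = ((m 0 : ℝ), (m 1 : ℝ))})

/-- Area (2-dimensional Lebesgue measure) of a plane set. -/
def area (S : Set (ℝ × ℝ)) : ℝ := (volume S).toReal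

/-- `ν∞(f, g)`. -/
def nuInf (f g : P2) : ℝ := area (newton (f * g)) - area (newton f) - area (newton g)

/-- `f` is nondegenerate at infinity. -/
def NondegAtInf (f : P2) : Prop :=
  ∀ w : ℝ × ℝ, (0 < w.1 ∨ 0 < w.2) →
    ¬ ∃ x y : ℂ, x ≠ 0 ∧ y ≠ 0 ∧
      eval ![x, y] (initForm w f) = 0 ∧
      eval ![x, y] (pderiv 0 (initForm w f)) = 0 ∧
      eval ![x, y] (pderiv 1 (initForm w f)) = 0

/-- The pair `(f, g)` is nondegenerate at infinity. -/
def PairNondegAtInf (f g : P2) : Prop :=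
  ∀ w : ℝ × ℝ, (0 < w.1 ∨ 0 < w.2) →
    ¬ ∃ x y : ℂ, x ≠ 0 ∧ y ≠ 0 ∧
      eval ![x, y] (initForm w f) = 0 ∧ eval ![x, y] (initForm w g) = 0

/-- `g` and `h` have no common nonunit factor. -/
def CoprimeDiv (g h : P2) : Prop := ∀ d : P2, d ∣ g → d ∣ h → IsUnit d

/-- `f` is nearly irreducible: positive degree, and any two nonconstant factors
have a common zero in `ℂ²`. -/
def NearlyIrreducible (f : P2) : Prop :=
  0 < f.totalDegree ∧
  ∀ g h : P2, g ∣ f → h ∣ f → 0 < g.totalDegree → 0 < h.totalDegree →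
    ∃ x y : ℂ, eval ![x, y] g = 0 ∧ eval ![x, y] h = 0

/-- The maximal ideal of polynomials vanishing at a point `P ∈ ℂ²`. -/
def mIdeal (Pt : ℂ × ℂ) : Ideal P2 := RingHom.ker (eval ![Pt.1, Pt.2] : P2 →+* ℂ)

instance (Pt : ℂ × ℂ) : (mIdeal Pt).IsPrime := RingHom.ker_isPrime _

/-- Intersection multiplicity `(f, g)_P`: the `ℂ`-dimension of the quotient of the
local ring of `ℂ²` at `P` by the ideal generated by `f` and `g`. -/
def interMult (f g : P2) (Pt : ℂ × ℂ) : ℕ :=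
  Module.finrank ℂ
    (Localization.AtPrime (mIdeal Pt) ⧸
      Ideal.span {algebraMap P2 (Localization.AtPrime (mIdeal Pt)) f,
                  algebraMap P2 (Localization.AtPrime (mIdeal Pt)) g})

/-- integer pairing -/
def dotZ (w m : ℤ × ℤ) : ℤ := w.1 * m.1 + w.2 * m.2

/-- Integer valued support functions of lattice polygons in the quadrant containing the origin. -/
structure IsSup (h : ℤ × ℤ → ℤ) : Prop where
  neg : ∀ w : ℤ × ℤ, w.1 ≤ 0 → w.2 ≤ 0 → h w = 0
  att : ∀ w : ℤ × ℤ, ∃ m : ℤ × ℤ, 0 ≤ m.1 ∧ 0 ≤ m.2 ∧ dotZ w m = h w ∧ ∀ w', dotZ w' m ≤ h w'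

lemma IsSup.zero : IsSup (fun _ => 0) :=
  ⟨fun _ _ _ => rfl, fun w => ⟨(0, 0), le_rfl, le_rfl, by simp [dotZ], by simp [dotZ]⟩⟩

lemma IsSup.add {h k : ℤ × ℤ → ℤ} (hh : IsSup h) (hk : IsSup k) : IsSup (fun w => h w + k w) := by
  refine ⟨fun w h1 h2 => by simp [hh.neg w h1 h2, hk.neg w h1 h2], fun w => ?_⟩
  obtain ⟨m, m1, m2, m3, m4⟩ := hh.att w
  obtain ⟨n, n1, n2, n3, n4⟩ := hk.att w
  refine ⟨(m.1 + n.1, m.2 + n.2), by simp; omega, by simp; omega, ?_, fun w' => ?_⟩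
  · rw [← m3, ← n3]; simp only [dotZ]; ring
  · have := m4 w'; have := n4 w'
    simp only [dotZ] at *; nlinarith

lemma IsSup.nsmul {h : ℤ × ℤ → ℤ} (hh : IsSup h) (n : ℕ) : IsSup (fun w => (n : ℤ) * h w) := by
  induction n with
  | zero => simpa using IsSup.zero
  | succ n ih =>
    have := ih.add hh
    convert this using 2
    push_cast; ring

lemma IsSup.sum {ι : Type*} (s : Finset ι) (h : ι → ℤ × ℤ → ℤ) (hh : ∀ i ∈ s, IsSup (h i)) :
    IsSup (fun w => ∑ i ∈ s, h i w) := by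
  classical
  induction s using Finset.induction_on with
  | empty => simpa using IsSup.zero
  | insert a s ha ih =>
    have := (hh a (Finset.mem_insert_self _ _)).add
      (ih fun i hi => hh i (Finset.mem_insert_of_mem hi))
    simpa only [Finset.sum_insert ha] using this

lemma IsSup.nonneg {h : ℤ × ℤ → ℤ} (hh : IsSup h) (w : ℤ × ℤ) : 0 ≤ h w := by
  obtain ⟨m, m1, m2, m3, m4⟩ := hh.att (-1, -1)
  rw [hh.neg _ (by simp) (by simp)] at m3
  simp only [dotZ] at m3 m4
  have e1 : m.1 = 0 := by omega
  have e2 : m.2 = 0 := by omega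
  simpa [e1, e2] using m4 w

lemma IsSup.comb {h : ℤ × ℤ → ℤ} (hh : IsSup h) {u v w : ℤ × ℤ} {x y z : ℤ} (hx : 0 ≤ x)
    (hy : 0 ≤ y) (hz : 0 ≤ z) (h1 : x * u.1 + y * v.1 = z * w.1)
    (h2 : x * u.2 + y * v.2 = z * w.2) : z * h w ≤ x * h u + y * h v := by
  obtain ⟨m, m1, m2, m3, m4⟩ := hh.att w
  have a1 := mul_le_mul_of_nonneg_left (m4 u) hx
  have a2 := mul_le_mul_of_nonneg_left (m4 v) hy
  have : z * dotZ w m = x * dotZ u m + y * dotZ v m := by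
    simp only [dotZ]
    linear_combination -m.1 * h1 - m.2 * h2
  rw [← m3, this]; linarith

lemma IsSup.smul {h : ℤ × ℤ → ℤ} (hh : IsSup h) {y : ℤ} (hy : 0 ≤ y) (w : ℤ × ℤ) :
    h (y * w.1, y * w.2) = y * h w := by
  apply le_antisymm
  · have := hh.comb (u := w) (v := (0,0)) (w := (y * w.1, y * w.2)) (x := y) (y := 0) (z := 1)
      hy le_rfl (by simp) (by simp) (by simp)
    simpa using this
  · have := hh.comb (u := (y * w.1, y * w.2)) (v := (0,0)) (w := w) (x := 1) (y := 0) (z := y)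
      (by simp) le_rfl hy (by simp) (by simp)
    simpa using this

/-- `m` violates the inequality of `w`. -/
def Viol (h : ℤ × ℤ → ℤ) (m w : ℤ × ℤ) : Prop := h w < dotZ w m

lemma IsSup.viol {h : ℤ × ℤ → ℤ} (hh : IsSup h) {m u v w : ℤ × ℤ} {x y z : ℤ} (hx : 0 < x)
    (hy : 0 ≤ y) (hz : 0 ≤ z) (h1 : x * u.1 + y * v.1 = z * w.1)
    (h2 : x * u.2 + y * v.2 = z * w.2) (hu : Viol h m u) (hv : Viol h m v) : Viol h m w := by
  have := hh.comb hx.le hy hz h1 h2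
  have e : z * dotZ w m = x * dotZ u m + y * dotZ v m := by
    simp only [dotZ]
    linear_combination -m.1 * h1 - m.2 * h2
  unfold Viol at *
  by_contra hc
  push Not at hc
  have a0 := mul_le_mul_of_nonneg_left hc hz
  have a1 := mul_lt_mul_of_pos_left hu hx
  have a2 := mul_le_mul_of_nonneg_left hv.le hy
  linarith

/-- Stern–Brocot tree of a cone. -/
def tree : ℕ → ℤ × ℤ → ℤ × ℤ → Finset (ℤ × ℤ)
  | 0, _, _ => ∅
  | n + 1, u, v => insert (u + v) (tree n u (u + v) ∪ tree n (u + v) v)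

/-- Summing a function of the cone over the nodes of the tree. -/
def ksum (F : ℤ × ℤ → ℤ × ℤ → ℤ) : ℕ → ℤ × ℤ → ℤ × ℤ → ℤ
  | 0, _, _ => 0
  | n + 1, u, v => F u v + ksum F n u (u + v) + ksum F n (u + v) v

lemma ksum_add (F G : ℤ × ℤ → ℤ × ℤ → ℤ) (n : ℕ) (u v : ℤ × ℤ) :
    ksum (fun u v => F u v + G u v) n u v = ksum F n u v + ksum G n u v := by
  induction n generalizing u v with
  | zero => simp [ksum]
  | succ n ih => simp only [ksum, ih]; ring

lemma ksum_mul (c : ℤ) (F : ℤ × ℤ → ℤ × ℤ → ℤ) (n : ℕ) (u v : ℤ × ℤ) :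
    ksum (fun u v => c * F u v) n u v = c * ksum F n u v := by
  induction n generalizing u v with
  | zero => simp [ksum]
  | succ n ih => simp only [ksum, ih]; ring

lemma mem_tree {n : ℕ} {u v w : ℤ × ℤ} (hw : w ∈ tree n u v) :
    ∃ x y : ℤ, 0 < x ∧ 0 < y ∧ w.1 = x * u.1 + y * v.1 ∧ w.2 = x * u.2 + y * v.2 := by
  induction n generalizing u v with
  | zero => simp [tree] at hw
  | succ n ih =>
    simp only [tree, Finset.mem_insert, Finset.mem_union] at hw
    rcases hw with rfl | hw | hw
    · exact ⟨1, 1, by simp, by simp, by simp, by simp⟩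
    · obtain ⟨x, y, hx, hy, h1, h2⟩ := ih hw
      refine ⟨x + y, y, by omega, hy, ?_, ?_⟩
      · rw [h1]; simp; ring
      · rw [h2]; simp; ring
    · obtain ⟨x, y, hx, hy, h1, h2⟩ := ih hw
      refine ⟨x, x + y, hx, by omega, ?_, ?_⟩
      · rw [h1]; simp; ring
      · rw [h2]; simp; ring

lemma tree_mono {n k : ℕ} (h : n ≤ k) (u v : ℤ × ℤ) : tree n u v ⊆ tree k u v := by
  induction n generalizing u v k with
  | zero => simp [tree]
  | succ n ih =>
    obtain ⟨k, rfl⟩ : ∃ j, k = j + 1 := ⟨k - 1, by omega⟩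
    simp only [tree]
    exact Finset.insert_subset_insert _
      (Finset.union_subset_union (ih (by omega) _ _) (ih (by omega) _ _))

lemma exists_tree (s : ℕ) : ∀ (u v : ℤ × ℤ) (x y : ℤ), 0 < x → 0 < y → IsCoprime x y →
    x + y ≤ s → ((x * u.1 + y * v.1, x * u.2 + y * v.2) : ℤ × ℤ) ∈ tree s u v := by
  induction s with
  | zero => intro u v x y hx hy _ h; simp at h; omega
  | succ s ih =>
    intro u v x y hx hy hc h
    push_cast at h
    simp only [tree, Finset.mem_insert, Finset.mem_union]
    rcases lt_trichotomy x y with hl | rfl | hl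
    · right; right
      have hc' : IsCoprime x (y - x) := by
        have := IsCoprime.add_mul_left_right hc (-1)
        rwa [show y + x * -1 = y - x by ring] at this
      have := ih (u + v) v x (y - x) hx (by omega) hc' (by omega)
      convert this using 2
      · simp; ring
      · simp; ring
    · left
      have : IsUnit x := by simpa [isCoprime_self] using hc
      have : x = 1 := by
        rcases Int.isUnit_iff.1 this with h | h <;> omega
      subst this
      ext <;> simp
    · right; left
      have hc' : IsCoprime (x - y) y := by
        have := IsCoprime.add_mul_left_left hc (-1)
        rwa [show x + y * -1 = x - y by ring] at this
      have := ih u (u + v) (x - y) y (by omega) hy hc' (by omega)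
      convert this using 2
      · simp; ring
      · simp; ring

/-- bad points in a cone -/
def Bad (h : ℤ × ℤ → ℤ) (n : ℕ) (u v : ℤ × ℤ) : Set (ℤ × ℤ) :=
  {m | ¬ Viol h m u ∧ ¬ Viol h m v ∧ ∃ w ∈ tree n u v, Viol h m w}

def corner (h : ℤ × ℤ → ℤ) (u v : ℤ × ℤ) : Set (ℤ × ℤ) :=
  {m | ¬ Viol h m u ∧ ¬ Viol h m v ∧ Viol h m (u + v)}

/-- the defect of linearity -/
def kk (h : ℤ × ℤ → ℤ) (u v : ℤ × ℤ) : ℤ := h u + h v - h (u + v)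

lemma triangle_card (k : ℕ) :
    ((Finset.range k).sigma (fun i => Finset.range (k - i))).card * 2 = k * (k + 1) := by
  rw [Finset.card_sigma]
  simp only [Finset.card_range]
  have : ∑ x ∈ Finset.range k, (k - x) = ∑ x ∈ Finset.range (k + 1), x := by
    rw [← Finset.sum_range_reflect (fun x => x) (k + 1), Finset.sum_range_succ]
    simp
  rw [this, Finset.sum_range_id_mul_two]
  simp [mul_comm]

lemma corner_card {h : ℤ × ℤ → ℤ} (hh : IsSup h) {u v : ℤ × ℤ}
    (hdet : u.1 * v.2 - u.2 * v.1 = 1) :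
    (corner h u v).Finite ∧ 2 * ((corner h u v).ncard : ℤ) = kk h u v * (kk h u v + 1) := by
  have hk0 : 0 ≤ kk h u v := by
    have := hh.comb (u := u) (v := v) (w := u + v) (x := 1) (y := 1) (z := 1) (by simp) (by simp)
      (by simp) (by simp) (by simp)
    unfold kk; linarith
  obtain ⟨k, hk⟩ := Int.eq_ofNat_of_zero_le hk0
  let φ : (Σ _ : ℕ, ℕ) → ℤ × ℤ := fun p =>
    ((h u - p.1) * v.2 - (h v - p.2) * u.2, (h v - p.2) * u.1 - (h u - p.1) * v.1)
  have hφu : ∀ p, dotZ u (φ p) = h u - p.1 := by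
    intro p; simp only [dotZ, φ]; linear_combination (h u - p.1) * hdet
  have hφv : ∀ p, dotZ v (φ p) = h v - p.2 := by
    intro p; simp only [dotZ, φ]; linear_combination (h v - p.2) * hdet
  have hadd : ∀ m, dotZ (u + v) m = dotZ u m + dotZ v m := by
    intro m; simp only [dotZ, Prod.fst_add, Prod.snd_add]; ring
  have himg : corner h u v = φ '' ((Finset.range k).sigma (fun i => Finset.range (k - i)) : Finset _) := by
    ext m
    simp only [corner, Viol, Set.mem_ofPred_eq, Set.mem_image, Finset.mem_coe, Finset.mem_sigma,
      Finset.mem_range, not_lt]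
    constructor
    · rintro ⟨h1, h2, h3⟩
      refine ⟨⟨(h u - dotZ u m).toNat, (h v - dotZ v m).toNat⟩, ?_, ?_⟩
      · rw [hadd] at h3; unfold kk at hk; simp only; omega
      · simp only [φ]
        rw [Int.toNat_of_nonneg (by omega), Int.toNat_of_nonneg (by omega)]
        ext
        · simp only [dotZ]; linear_combination m.1 * hdet
        · simp only [dotZ]; linear_combination m.2 * hdet
    · rintro ⟨p, ⟨h1, h2⟩, rfl⟩
      rw [hadd, hφu, hφv]
      unfold kk at hk
      omega
  have hinj : Function.Injective φ := by
    intro p q hpq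
    have h1 := hφu p; have h2 := hφv p
    rw [hpq, hφu] at h1; rw [hpq, hφv] at h2
    rcases p with ⟨a, b⟩; rcases q with ⟨c, d⟩
    simp only at h1 h2
    have : a = c := by omega
    have : b = d := by omega
    subst_vars; rfl
  rw [himg]
  refine ⟨Set.toFinite _, ?_⟩
  rw [Set.ncard_image_of_injective _ hinj, Set.ncard_coe_finset, hk, mul_comm]
  exact_mod_cast triangle_card k

lemma bad_succ {h : ℤ × ℤ → ℤ} (hh : IsSup h) (n : ℕ) (u v : ℤ × ℤ) :
    Bad h (n + 1) u v = corner h u v ∪ (Bad h n u (u + v) ∪ Bad h n (u + v) v) := by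
  ext m
  simp only [Bad, corner, tree, Finset.mem_insert, Finset.mem_union, Set.mem_ofPred_eq,
    Set.mem_union]
  constructor
  · rintro ⟨h1, h2, w, hw, h3⟩
    by_cases hc : Viol h m (u + v)
    · exact Or.inl ⟨h1, h2, hc⟩
    · right
      rcases hw with rfl | hw | hw
      · exact absurd h3 hc
      · exact Or.inl ⟨h1, hc, w, hw, h3⟩
      · exact Or.inr ⟨hc, h2, w, hw, h3⟩
  · rintro (⟨h1, h2, h3⟩ | ⟨h1, h2, w, hw, h3⟩ | ⟨h1, h2, w, hw, h3⟩)
    · exact ⟨h1, h2, _, Or.inl rfl, h3⟩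
    · refine ⟨h1, fun hv => h2 ?_, w, Or.inr (Or.inl hw), h3⟩
      obtain ⟨x, y, hx, hy, e1, e2⟩ := mem_tree hw
      refine hh.viol (x := 1) (y := x) (z := x + y) (by simp) hx.le (by omega) ?_ ?_ h3 hv
      · rw [e1]; simp; ring
      · rw [e2]; simp; ring
    · refine ⟨fun hv => h1 ?_, h2, w, Or.inr (Or.inr hw), h3⟩
      obtain ⟨x, y, hx, hy, e1, e2⟩ := mem_tree hw
      refine hh.viol (x := 1) (y := y) (z := x + y) (by simp) hy.le (by omega) ?_ ?_ h3 hv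
      · rw [e1]; simp; ring
      · rw [e2]; simp; ring

lemma bad_disj {h : ℤ × ℤ → ℤ} (hh : IsSup h) (n : ℕ) (u v : ℤ × ℤ) :
    Disjoint (Bad h n u (u + v)) (Bad h n (u + v) v) := by
  rw [Set.disjoint_left]
  rintro m ⟨h1, h2, w, hw, h3⟩ ⟨k1, k2, w', hw', k3⟩
  obtain ⟨x, y, hx, hy, e1, e2⟩ := mem_tree hw
  obtain ⟨x', y', hx', hy', e1', e2'⟩ := mem_tree hw'
  refine h2 (hh.viol (x := y') (y := x) (z := y' * (x + y) - y' * x + x * (x' + y')) hy' hx.le ?_ ?_ ?_ h3 k3)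
  · have : 0 < y' * y := mul_pos hy' hy
    have : 0 < x * (x' + y') := mul_pos hx (by omega)
    nlinarith
  · rw [e1, e1']; simp; ring
  · rw [e2, e2']; simp; ring

lemma bad_card {h : ℤ × ℤ → ℤ} (hh : IsSup h) (n : ℕ) (u v : ℤ × ℤ)
    (hdet : u.1 * v.2 - u.2 * v.1 = 1) :
    (Bad h n u v).Finite ∧ 2 * ((Bad h n u v).ncard : ℤ) =
      ksum (fun u v => kk h u v * (kk h u v + 1)) n u v := by
  induction n generalizing u v with
  | zero =>
    have : Bad h 0 u v = ∅ := by ext; simp [Bad, tree]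
    simp [this, ksum]
  | succ n ih =>
    obtain ⟨f0, c0⟩ := corner_card hh hdet
    obtain ⟨f1, c1⟩ := ih u (u + v) (by simp; linear_combination hdet)
    obtain ⟨f2, c2⟩ := ih (u + v) v (by simp; linear_combination hdet)
    rw [bad_succ hh]
    refine ⟨f0.union (f1.union f2), ?_⟩
    have d : Disjoint (corner h u v) (Bad h n u (u + v) ∪ Bad h n (u + v) v) := by
      rw [Set.disjoint_left]
      rintro m ⟨_, _, h3⟩ (⟨_, k, _⟩ | ⟨k, _⟩) <;> exact k h3
    rw [Set.ncard_union_eq d f0 (f1.union f2), Set.ncard_union_eq (bad_disj hh n u v) f1 f2]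
    simp only [ksum]
    push_cast
    linarith

/-- The rays. -/
def rays (n : ℕ) : Finset (ℤ × ℤ) :=
  {(0, -1), (1, 0), (0, 1), (-1, 0)} ∪ (tree n (0, -1) (1, 0) ∪
    (tree n (1, 0) (0, 1) ∪ tree n (0, 1) (-1, 0)))

/-- Lattice points of the polygon. -/
def latS (n : ℕ) (h : ℤ × ℤ → ℤ) : Set (ℤ × ℤ) := {m | ∀ w ∈ rays n, dotZ w m ≤ h w}

def ksum3 (F : ℤ × ℤ → ℤ × ℤ → ℤ) (n : ℕ) : ℤ :=
  ksum F n (0, -1) (1, 0) + ksum F n (1, 0) (0, 1) + ksum F n (0, 1) (-1, 0)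

lemma ksum3_add (F G : ℤ × ℤ → ℤ × ℤ → ℤ) (n : ℕ) :
    ksum3 (fun u v => F u v + G u v) n = ksum3 F n + ksum3 G n := by
  simp only [ksum3, ksum_add]; ring

lemma ksum3_mul (c : ℤ) (F : ℤ × ℤ → ℤ × ℤ → ℤ) (n : ℕ) :
    ksum3 (fun u v => c * F u v) n = c * ksum3 F n := by
  simp only [ksum3, ksum_mul]; ring

def rect (h : ℤ × ℤ → ℤ) : Set (ℤ × ℤ) := Set.Icc (0, 0) (h (1, 0), h (0, 1))

lemma rect_iff {h : ℤ × ℤ → ℤ} (hh : IsSup h) (m : ℤ × ℤ) : m ∈ rect h ↔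
    ¬ Viol h m (0, -1) ∧ ¬ Viol h m (1, 0) ∧ ¬ Viol h m (0, 1) ∧ ¬ Viol h m (-1, 0) := by
  simp only [rect, Set.mem_Icc, Prod.le_def, Viol, dotZ, hh.neg (0, -1) (by simp) (by simp),
    hh.neg (-1, 0) (by simp) (by simp)]
  omega

lemma latS_card {h : ℤ × ℤ → ℤ} (hh : IsSup h) (n : ℕ) :
    (latS n h).Finite ∧ 2 * ((latS n h).ncard : ℤ) =
      2 * ((h (1, 0) + 1) * (h (0, 1) + 1)) - ksum3 (fun u v => kk h u v * (kk h u v + 1)) n := by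
  obtain ⟨f1, c1⟩ := bad_card hh n (0, -1) (1, 0) (by simp)
  obtain ⟨f2, c2⟩ := bad_card hh n (1, 0) (0, 1) (by simp)
  obtain ⟨f3, c3⟩ := bad_card hh n (0, 1) (-1, 0) (by simp)
  set B1 := Bad h n (0, -1) (1, 0) with hB1
  set B2 := Bad h n (1, 0) (0, 1) with hB2
  set B3 := Bad h n (0, 1) (-1, 0) with hB3
  have hrf : (rect h).Finite := Set.finite_Icc _ _
  have hS : latS n h ⊆ rect h := by
    intro m hm
    rw [rect_iff hh]
    simp only [Viol, not_lt]
    refine ⟨hm _ ?_, hm _ ?_, hm _ ?_, hm _ ?_⟩ <;> simp [rays]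
  have i1 : B1 ⊆ rect h := by
    rintro m ⟨h1, h2, w, hw, h3⟩
    obtain ⟨x, y, hx, hy, e1, e2⟩ := mem_tree hw
    simp at e1 e2
    rw [rect_iff hh]
    refine ⟨h1, h2, fun hv => h2 ?_, fun hv => h1 ?_⟩
    · exact hh.viol (x := 1) (y := x) (z := y) (by simp) hx.le hy.le (by simp [e1]) (by simp [e2]) h3 hv
    · exact hh.viol (x := 1) (y := y) (z := x) (by simp) hy.le hx.le (by simp [e1]) (by simp [e2]) h3 hv
  have i2 : B2 ⊆ rect h := by
    rintro m ⟨h1, h2, w, hw, h3⟩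
    obtain ⟨x, y, hx, hy, e1, e2⟩ := mem_tree hw
    simp at e1 e2
    rw [rect_iff hh]
    refine ⟨fun hv => h1 ?_, h1, h2, fun hv => h2 ?_⟩
    · exact hh.viol (x := 1) (y := y) (z := x) (by simp) hy.le hx.le (by simp [e1]) (by simp [e2]) h3 hv
    · exact hh.viol (x := 1) (y := x) (z := y) (by simp) hx.le hy.le (by simp [e1]) (by simp [e2]) h3 hv
  have i3 : B3 ⊆ rect h := by
    rintro m ⟨h1, h2, w, hw, h3⟩
    obtain ⟨x, y, hx, hy, e1, e2⟩ := mem_tree hw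
    simp at e1 e2
    rw [rect_iff hh]
    refine ⟨fun hv => h2 ?_, fun hv => h1 ?_, h1, h2⟩
    · exact hh.viol (x := 1) (y := x) (z := y) (by simp) hx.le hy.le (by simp [e1]) (by simp [e2]) h3 hv
    · exact hh.viol (x := 1) (y := y) (z := x) (by simp) hy.le hx.le (by simp [e1]) (by simp [e2]) h3 hv
  have d12 : Disjoint B1 B2 := by
    rw [Set.disjoint_left]
    rintro m ⟨h1, h2, w, hw, h3⟩ ⟨k1, k2, w', hw', k3⟩
    obtain ⟨x, y, hx, hy, e1, e2⟩ := mem_tree hw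
    obtain ⟨x', y', hx', hy', e1', e2'⟩ := mem_tree hw'
    simp at e1 e2 e1' e2'
    have := mul_pos hy' hy
    have := mul_pos hx hx'
    refine h2 (hh.viol (x := y') (y := x) (z := y' * y + x * x') hy' hx.le (by omega) ?_ ?_ h3 k3)
    · rw [e1, e1']; ring
    · rw [e2, e2']; ring
  have d23 : Disjoint B2 B3 := by
    rw [Set.disjoint_left]
    rintro m ⟨h1, h2, w, hw, h3⟩ ⟨k1, k2, w', hw', k3⟩
    obtain ⟨x, y, hx, hy, e1, e2⟩ := mem_tree hw
    obtain ⟨x', y', hx', hy', e1', e2'⟩ := mem_tree hw'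
    simp at e1 e2 e1' e2'
    have := mul_pos hy' hy
    have := mul_pos hx hx'
    refine h2 (hh.viol (x := y') (y := x) (z := y' * y + x * x') hy' hx.le (by omega) ?_ ?_ h3 k3)
    · rw [e1, e1']; ring
    · rw [e2, e2']; ring
  have d13 : Disjoint B1 B3 := by
    rw [Set.disjoint_left]
    rintro m ⟨h1, h2, w, hw, h3⟩ ⟨k1, k2, w', hw', k3⟩
    obtain ⟨x, y, hx, hy, e1, e2⟩ := mem_tree hw
    obtain ⟨x', y', hx', hy', e1', e2'⟩ := mem_tree hw'
    simp at e1 e2 e1' e2'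
    rcases le_total (y' * x) (y * x') with hl | hl
    · refine k1 (hh.viol (x := y') (y := y) (z := y * x' - y' * x) hy' hy.le (by omega) ?_ ?_ h3 k3)
      · rw [e1, e1']; ring
      · rw [e2, e2']; ring
    · refine h1 (hh.viol (x := y') (y := y) (z := y' * x - y * x') hy' hy.le (by omega) ?_ ?_ h3 k3)
      · rw [e1, e1']; ring
      · rw [e2, e2']; ring
  have hU : rect h = latS n h ∪ (B1 ∪ (B2 ∪ B3)) := by
    apply Set.Subset.antisymm
    · intro m hm
      by_cases hc : m ∈ latS n h
      · exact Or.inl hc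
      · right
        obtain ⟨r1, r2, r3, r4⟩ := (rect_iff hh m).1 hm
        simp only [latS, Set.mem_ofPred_eq, not_forall, not_le] at hc
        obtain ⟨w, hw, hv⟩ := hc
        simp only [rays, Finset.mem_union, Finset.mem_insert, Finset.mem_singleton] at hw
        rcases hw with (rfl | rfl | rfl | rfl) | hw | hw | hw
        · exact absurd hv r1
        · exact absurd hv r2
        · exact absurd hv r3
        · exact absurd hv r4
        · exact Or.inl ⟨r1, r2, w, hw, hv⟩
        · exact Or.inr (Or.inl ⟨r2, r3, w, hw, hv⟩)
        · exact Or.inr (Or.inr ⟨r3, r4, w, hw, hv⟩)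
    · exact Set.union_subset hS (Set.union_subset i1 (Set.union_subset i2 i3))
  have dS : Disjoint (latS n h) (B1 ∪ (B2 ∪ B3)) := by
    rw [Set.disjoint_left]
    rintro m hm (⟨_, _, w, hw, hv⟩ | ⟨_, _, w, hw, hv⟩ | ⟨_, _, w, hw, hv⟩)
    all_goals
      refine absurd hv (not_lt.2 (hm w ?_))
      simp only [rays, Finset.mem_union]; tauto
  have fS := hrf.subset hS
  have hcard : ((rect h).ncard : ℤ) = (h (1, 0) + 1) * (h (0, 1) + 1) := by
    have n1 := hh.nonneg (1, 0)
    have n2 := hh.nonneg (0, 1)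
    have : rect h = (Finset.Icc ((0, 0) : ℤ × ℤ) (h (1, 0), h (0, 1)) : Finset _) := by
      simp [rect]
    rw [this, Set.ncard_coe_finset, ← Finset.Icc_product_Icc, Finset.card_product]
    simp
    rw [max_eq_left (by omega), max_eq_left (by omega)]
  refine ⟨fS, ?_⟩
  have d23' : Disjoint B1 (B2 ∪ B3) := by
    rw [Set.disjoint_union_right]; exact ⟨d12, d13⟩
  rw [hU, Set.ncard_union_eq dS fS (f1.union (f2.union f3)),
    Set.ncard_union_eq d23' f1 (f2.union f3), Set.ncard_union_eq d23 f2 f3] at hcard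
  simp only [ksum3]
  push_cast at hcard
  linarith

/-- The real polygon. -/
def polyR (n : ℕ) (h : ℤ × ℤ → ℤ) : Set (ℝ × ℝ) :=
  {z | ∀ w ∈ rays n, (w.1 : ℝ) * z.1 + (w.2 : ℝ) * z.2 ≤ (h w : ℝ)}

def polyF (n : ℕ) (h : ℤ × ℤ → ℤ) : Set (Fin 2 → ℝ) :=
  {z | ∀ w ∈ rays n, (w.1 : ℝ) * z 0 + (w.2 : ℝ) * z 1 ≤ (h w : ℝ)}

lemma area_polyR (n : ℕ) (h : ℤ × ℤ → ℤ) : area (polyR n h) = volume.real (polyF n h) := by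
  have hp := volume_preserving_finTwoArrow ℝ
  have : polyF n h = (MeasurableEquiv.finTwoArrow : (Fin 2 → ℝ) ≃ᵐ ℝ × ℝ) ⁻¹' polyR n h := by
    ext z; simp [polyF, polyR, MeasurableEquiv.finTwoArrow]
  rw [area, Measure.real, this, hp.measure_preimage_equiv]

lemma polyF_closed (n : ℕ) (h : ℤ × ℤ → ℤ) : IsClosed (polyF n h) := by
  have : polyF n h = ⋂ w ∈ rays n, {z : Fin 2 → ℝ | (w.1 : ℝ) * z 0 + (w.2 : ℝ) * z 1 ≤ (h w : ℝ)} := by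
    ext; simp [polyF]
  rw [this]
  refine isClosed_biInter fun w _ => isClosed_le (by fun_prop) (by fun_prop)

lemma polyF_convex (n : ℕ) (h : ℤ × ℤ → ℤ) : Convex ℝ (polyF n h) := by
  intro x hx y hy a b ha hb hab w hw
  have h1 := mul_le_mul_of_nonneg_left (hx w hw) ha
  have h2 := mul_le_mul_of_nonneg_left (hy w hw) hb
  simp only [Pi.add_apply, Pi.smul_apply, smul_eq_mul]
  have : (h w : ℝ) = a * h w + b * h w := by rw [← add_mul, hab, one_mul]
  rw [this]; linarith

lemma polyF_bounded (n : ℕ) {h : ℤ × ℤ → ℤ} (hh : IsSup h) :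
    Bornology.IsBounded (polyF n h) := by
  refine (Metric.isBounded_Icc (![0, 0] : Fin 2 → ℝ) ![(h (1, 0) : ℝ), (h (0, 1) : ℝ)]).subset ?_
  intro z hz
  have h1 := hz (0, -1) (by simp [rays])
  have h2 := hz (1, 0) (by simp [rays])
  have h3 := hz (0, 1) (by simp [rays])
  have h4 := hz (-1, 0) (by simp [rays])
  rw [hh.neg _ (by simp) (by simp)] at h1 h4
  simp at h1 h2 h3 h4
  rw [Set.mem_Icc]
  constructor
  · intro i; fin_cases i <;> simpa
  · intro i; fin_cases i <;> simpa

lemma card_polyF (n : ℕ) (h : ℤ × ℤ → ℤ) (N : ℕ) (hN : 0 < N) :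
    Nat.card ↑(polyF n h ∩ (N : ℝ)⁻¹ • (Submodule.span ℤ (Set.range (Pi.basisFun ℝ (Fin 2))) : Set (Fin 2 → ℝ)))
      = (latS n (fun w => (N : ℤ) * h w)).ncard := by
  have hN' : (0 : ℝ) < N := by exact_mod_cast hN
  let ψ : ℤ × ℤ → (Fin 2 → ℝ) := fun m => ![(N : ℝ)⁻¹ * m.1, (N : ℝ)⁻¹ * m.2]
  have hinj : Function.Injective ψ := by
    intro a b hab
    have h0 := congrFun hab 0
    have h1 := congrFun hab 1
    simp [ψ, hN.ne'] at h0 h1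
    ext <;> assumption
  rw [Nat.card_coe_set_eq, ← Set.ncard_image_of_injective _ hinj]
  congr 1
  ext z
  have hL : ∀ y : Fin 2 → ℝ, y ∈ Submodule.span ℤ (Set.range (Pi.basisFun ℝ (Fin 2))) ↔
      ∀ i, ∃ k : ℤ, (k : ℝ) = y i := by
    intro y
    rw [Module.Basis.mem_span_iff_repr_mem ℤ (Pi.basisFun ℝ (Fin 2)) y]
    simp
  simp only [Set.mem_inter_iff, Set.mem_smul_set, SetLike.mem_coe, hL, Set.mem_image]
  have key : ∀ m : ℤ × ℤ, ψ m ∈ polyF n h ↔ m ∈ latS n (fun w => (N : ℤ) * h w) := by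
    intro m
    simp only [polyF, latS, ψ, dotZ, Set.mem_ofPred_eq]
    refine forall₂_congr fun w _ => ?_
    simp only [Matrix.cons_val_zero, Matrix.cons_val_one]
    rw [← Int.cast_le (R := ℝ)]
    push_cast
    rw [← mul_le_mul_iff_right₀ hN']
    have : (N : ℝ) * (w.1 * ((N : ℝ)⁻¹ * m.1) + w.2 * ((N : ℝ)⁻¹ * m.2)) = w.1 * m.1 + w.2 * m.2 := by
      field_simp
    rw [this]
  constructor
  · rintro ⟨hz, y, hy, rfl⟩
    obtain ⟨a, ha⟩ := hy 0
    obtain ⟨b, hb⟩ := hy 1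
    have : ψ (a, b) = (N : ℝ)⁻¹ • y := by
      ext i; fin_cases i <;> simp [ψ, ha, hb]
    exact ⟨(a, b), (key _).1 (this ▸ hz), this⟩
  · rintro ⟨m, hm, rfl⟩
    refine ⟨(key m).2 hm, ![(m.1 : ℝ), m.2], ?_, ?_⟩
    · intro i; fin_cases i
      · exact ⟨m.1, by simp⟩
      · exact ⟨m.2, by simp⟩
    · ext i; fin_cases i <;> simp [ψ]

lemma area_formula (n : ℕ) {h : ℤ × ℤ → ℤ} (hh : IsSup h) :
    2 * area (polyR n h) = ((2 * (h (1, 0) * h (0, 1)) -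
      ksum3 (fun u v => kk h u v * kk h u v) n : ℤ) : ℝ) := by
  rw [area_polyR]
  have lim := tendsto_card_div_pow_atTop_volume (polyF n h) (polyF_bounded n hh)
    (polyF_closed n h).measurableSet ((polyF_convex n h).addHaar_frontier volume)
  have lim2 := lim.const_mul 2
  refine tendsto_nhds_unique lim2 ?_
  set A : ℤ := h (1, 0)
  set B : ℤ := h (0, 1)
  set K2 : ℤ := ksum3 (fun u v => kk h u v * kk h u v) n
  set K1 : ℤ := ksum3 (fun u v => kk h u v) n
  have formula : ∀ N : ℕ, 0 < N →
      2 * ((Nat.card ↑(polyF n h ∩ (N : ℝ)⁻¹ • (Submodule.span ℤ (Set.range (Pi.basisFun ℝ (Fin 2))) : Set (Fin 2 → ℝ))) : ℝ) / (N : ℝ) ^ Fintype.card (Fin 2)) =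
      2 * ((A + (N : ℝ)⁻¹) * (B + (N : ℝ)⁻¹)) - (K2 + (N : ℝ)⁻¹ * K1) := by
    intro N hN
    have hN' : (0 : ℝ) < N := by exact_mod_cast hN
    rw [card_polyF n h N hN]
    have c := (latS_card (hh.nsmul N) n).2
    have e : (fun u v => kk (fun w => (N : ℤ) * h w) u v * (kk (fun w => (N : ℤ) * h w) u v + 1)) =
        fun u v => (N : ℤ) ^ 2 * (kk h u v * kk h u v) + (N : ℤ) * kk h u v := by
      funext u v; simp only [kk]; ring
    rw [e, ksum3_add, ksum3_mul, ksum3_mul] at c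
    have c' : (2 : ℝ) * ((latS n (fun w => (N : ℤ) * h w)).ncard : ℝ) =
       2 * ((N * A + 1) * (N * B + 1)) - (N ^ 2 * K2 + N * K1) := by exact_mod_cast c
    rw [← mul_div_assoc, c']
    simp only [Fintype.card_fin]
    field_simp
  have l0 : Filter.Tendsto (fun N : ℕ => ((N : ℝ)⁻¹)) Filter.atTop (nhds 0) :=
    tendsto_inv_atTop_nhds_zero_nat
  have l1 : Filter.Tendsto (fun N : ℕ => 2 * (((A : ℝ) + (N : ℝ)⁻¹) * (B + (N : ℝ)⁻¹)) - (K2 + (N : ℝ)⁻¹ * K1))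
      Filter.atTop (nhds (2 * (((A : ℝ) + 0) * (B + 0)) - (K2 + 0 * K1))) :=
    (((l0.const_add _).mul (l0.const_add _)).const_mul 2).sub ((l0.mul_const _).const_add _)
  have e : (((2 * (A * B) - K2 : ℤ)) : ℝ) = (2 * (((A : ℝ) + 0) * (B + 0)) - (K2 + 0 * K1)) := by
    push_cast; ring
  rw [e]
  refine l1.congr' ?_
  filter_upwards [Filter.eventually_gt_atTop 0] with N hN
  exact (formula N hN).symm

/-- The second difference of lattice point numbers is the mixed area. -/
lemma mixed_formula (n : ℕ) {a b c : ℤ × ℤ → ℤ} (ha : IsSup a) (hb : IsSup b) (hc : IsSup c) :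
    ((latS n (fun w => c w + a w + b w)).ncard : ℝ) + (latS n c).ncard =
      (latS n (fun w => c w + a w)).ncard + (latS n (fun w => c w + b w)).ncard +
      (area (polyR n (fun w => a w + b w)) - area (polyR n a) - area (polyR n b)) := by
  have e1 := (latS_card ((hc.add ha).add hb) n).2
  have e2 := (latS_card hc n).2
  have e3 := (latS_card (hc.add ha) n).2
  have e4 := (latS_card (hc.add hb) n).2
  have a1 := area_formula n (ha.add hb)
  have a2 := area_formula n ha
  have a3 := area_formula n hb
  have k : ksum3 (fun u v => kk (fun w => c w + a w + b w) u v * (kk (fun w => c w + a w + b w) u v + 1)) n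
      + ksum3 (fun u v => kk c u v * (kk c u v + 1)) n
      + ksum3 (fun u v => kk a u v * kk a u v) n + ksum3 (fun u v => kk b u v * kk b u v) n =
      ksum3 (fun u v => kk (fun w => c w + a w) u v * (kk (fun w => c w + a w) u v + 1)) n +
      ksum3 (fun u v => kk (fun w => c w + b w) u v * (kk (fun w => c w + b w) u v + 1)) n +
      ksum3 (fun u v => kk (fun w => a w + b w) u v * kk (fun w => a w + b w) u v) n := by
    simp only [← ksum3_add]
    congr 1
    funext u v
    simp only [kk]; ring
  have e1' := congrArg (Int.cast : ℤ → ℝ) e1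
  have e2' := congrArg (Int.cast : ℤ → ℝ) e2
  have e3' := congrArg (Int.cast : ℤ → ℝ) e3
  have e4' := congrArg (Int.cast : ℤ → ℝ) e4
  have k' := congrArg (Int.cast : ℤ → ℝ) k
  push_cast at e1' e2' e3' e4' k' a1 a2 a3
  linarith

lemma two_max {α : Type*} (T : Finset α) (hT : T.Nonempty) (A A' : α → ℝ) :
    ∃ β ∈ T, (∀ γ ∈ T, A γ ≤ A β) ∧ ((∀ γ ∈ T, A' γ ≤ A' β) ∨
      ∃ β' ∈ T, 0 < A' β' - A' β ∧ 0 < A β - A β' ∧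
        ∀ γ ∈ T, (A' β' - A' β) * A γ + (A β - A β') * A' γ ≤
          (A' β' - A' β) * A β + (A β - A β') * A' β) := by
  classical
  obtain ⟨β₀, hβ₀, hmax₀⟩ := T.exists_max_image A hT
  obtain ⟨β, hβ, hmax⟩ := (T.filter (fun γ => A β₀ ≤ A γ)).exists_max_image A'
    ⟨β₀, by simp [hβ₀]⟩
  simp only [Finset.mem_filter] at hβ hmax
  have hA : ∀ γ ∈ T, A γ ≤ A β := fun γ hγ => (hmax₀ γ hγ).trans hβ.2
  refine ⟨β, hβ.1, hA, ?_⟩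
  by_cases h : ∀ γ ∈ T, A' γ ≤ A' β
  · exact Or.inl h
  right
  push Not at h
  obtain ⟨γ₀, hγ₀, h0⟩ := h
  obtain ⟨β', hβ', hmin⟩ := (T.filter (fun γ => A' β < A' γ)).exists_min_image
    (fun γ => (A β - A γ) / (A' γ - A' β)) ⟨γ₀, by simp [hγ₀, h0]⟩
  simp only [Finset.mem_filter] at hβ' hmin
  have hlt : ∀ γ ∈ T, A' β < A' γ → A γ < A β := by
    intro γ hγ hl
    by_contra hc
    push Not at hc
    have := hmax γ ⟨hγ, hβ.2.trans hc⟩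
    linarith
  refine ⟨β', hβ'.1, by linarith, by linarith [hlt β' hβ'.1 hβ'.2], ?_⟩
  intro γ hγ
  have p1 : 0 < A' β' - A' β := by linarith
  have p2 : 0 < A β - A β' := by linarith [hlt β' hβ'.1 hβ'.2]
  by_cases hc : A' β < A' γ
  · have := hmin γ ⟨hγ, hc⟩
    rw [div_le_div_iff₀ p1 (by linarith)] at this
    nlinarith
  · push Not at hc
    have := mul_le_mul_of_nonneg_left (hA γ hγ) p1.le
    have := mul_le_mul_of_nonneg_left hc p2.le
    linarith

lemma prim_mem_rays (n : ℕ) (w : ℤ × ℤ) (hc : IsCoprime w.1 w.2) (hn : |w.1| + |w.2| ≤ n)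
    (hp : 0 < w.1 ∨ 0 < w.2) : w ∈ rays n := by
  obtain ⟨p, q⟩ := w
  simp only at hc hn hp
  simp only [rays, Finset.mem_union, Finset.mem_insert, Finset.mem_singleton]
  rcases lt_trichotomy p 0 with h1 | rfl | h1
  · have h2 : 0 < q := by omega
    right; right; right
    rw [abs_of_neg h1, abs_of_pos h2] at hn
    have := exists_tree n (0, 1) (-1, 0) q (-p) h2 (by omega) (hc.symm.neg_right) (by omega)
    simpa using this
  · have h2 : 0 < q := by omega
    rw [isCoprime_zero_left, Int.isUnit_iff] at hc
    left; rcases hc with rfl | rfl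
    · simp
    · simp at h2
  · rcases lt_trichotomy q 0 with h2 | rfl | h2
    · right; left
      rw [abs_of_pos h1, abs_of_neg h2] at hn
      have := exists_tree n (0, -1) (1, 0) (-q) p (by omega) h1 (hc.symm.neg_left) (by omega)
      simpa using this
    · rw [isCoprime_zero_right, Int.isUnit_iff] at hc
      left; rcases hc with rfl | rfl
      · simp
      · simp at h1
    · right; right; left
      rw [abs_of_pos h1, abs_of_pos h2] at hn
      have := exists_tree n (1, 0) (0, 1) p q h1 h2 hc (by omega)
      simpa using this

lemma ray_real (n : ℕ) (s : ℝ × ℝ) (δ : ℤ × ℤ) (hδ : δ ≠ 0) (hn : |δ.1| + |δ.2| ≤ n)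
    (h : s.1 * δ.1 + s.2 * δ.2 = 0) (hs : 0 < s.1 ∨ 0 < s.2) :
    ∃ y : ℝ, 0 < y ∧ ∃ w ∈ rays n, IsCoprime w.1 w.2 ∧ s = (y * w.1, y * w.2) := by
  obtain ⟨a, b⟩ := δ
  obtain ⟨p, q⟩ := s
  simp only at hn h hs
  have hab : a ≠ 0 ∨ b ≠ 0 := by
    by_contra hc; push Not at hc; exact hδ (by simp [hc.1, hc.2])
  obtain ⟨g, a', b', hg, hco, ha, hb⟩ : ∃ (g a' b' : ℤ), 0 < g ∧ IsCoprime a' b' ∧ a = g * a' ∧ b = g * b' := by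
    have hg : 0 < Int.gcd a b := Int.gcd_pos_iff.2 hab
    refine ⟨Int.gcd a b, a / Int.gcd a b, b / Int.gcd a b, by exact_mod_cast hg, ?_, ?_, ?_⟩
    · exact Int.isCoprime_iff_gcd_eq_one.2 (Int.gcd_div_gcd_div_gcd hg)
    · exact (Int.mul_ediv_cancel' (Int.gcd_dvd_left ..)).symm
    · exact (Int.mul_ediv_cancel' (Int.gcd_dvd_right ..)).symm
  have hle : |a'| + |b'| ≤ n := by
    refine le_trans ?_ hn
    rw [ha, hb, abs_mul, abs_mul, abs_of_pos hg]
    have := abs_nonneg a'; have := abs_nonneg b'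
    nlinarith
  have hgR : (0 : ℝ) < g := by exact_mod_cast hg
  have h' : p * a' + q * b' = 0 := by
    have : (g : ℝ) * (p * a' + q * b') = 0 := by
      rw [ha, hb] at h; push_cast at h; linarith
    exact (mul_eq_zero.1 this).resolve_left hgR.ne'
  obtain ⟨x, y, hxy⟩ := hco
  have hxyR : (x : ℝ) * a' + y * b' = 1 := by exact_mod_cast hxy
  set c : ℝ := y * p - x * q
  have e1 : p = c * b' := by simp only [c]; linear_combination x * h' - p * hxyR
  have e2 : q = c * (-a') := by simp only [c]; linear_combination y * h' - q * hxyR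
  rcases lt_trichotomy c 0 with hc | hc | hc
  · refine ⟨-c, by linarith, (-b', a'), prim_mem_rays n _ ?_ ?_ ?_, ?_, ?_⟩
    · exact (IsCoprime.symm ⟨x, y, hxy⟩).neg_left
    · simp; linarith
    · simp only
      rcases hs with hs | hs
      · left
        rw [e1] at hs
        have : (b' : ℝ) < 0 := by nlinarith
        have : b' < 0 := by exact_mod_cast this
        omega
      · right
        rw [e2] at hs
        have : (0 : ℝ) < a' := by nlinarith
        exact_mod_cast this
    · exact (IsCoprime.symm ⟨x, y, hxy⟩).neg_left
    · ext <;> simp [e1, e2]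
  · rw [hc] at e1 e2; simp [e1, e2] at hs
  · refine ⟨c, hc, (b', -a'), prim_mem_rays n _ ?_ ?_ ?_, ?_, ?_⟩
    · exact (IsCoprime.symm ⟨x, y, hxy⟩).neg_right
    · simp; linarith
    · simp only
      rcases hs with hs | hs
      · left
        rw [e1] at hs
        have : (0 : ℝ) < b' := by nlinarith
        exact_mod_cast this
      · right
        rw [e2] at hs
        have : (a' : ℝ) < 0 := by nlinarith
        have : a' < 0 := by exact_mod_cast this
        omega
    · exact (IsCoprime.symm ⟨x, y, hxy⟩).neg_right
    · ext <;> simp [e1, e2]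

lemma ray_int (n : ℕ) (s : ℤ × ℤ) (δ : ℤ × ℤ) (hδ : δ ≠ 0) (hn : |δ.1| + |δ.2| ≤ n)
    (h : dotZ s δ = 0) (hs : 0 < s.1 ∨ 0 < s.2) :
    ∃ y : ℤ, 0 < y ∧ ∃ w ∈ rays n, s = (y * w.1, y * w.2) := by
  obtain ⟨y, hy, w, hw, ⟨a, b, hab⟩, hsw⟩ := ray_real n ((s.1 : ℝ), (s.2 : ℝ)) δ hδ hn
    (by rw [dotZ] at h; simp only; exact_mod_cast h) (by simp only; exact_mod_cast hs)
  have e1 : (s.1 : ℝ) = y * w.1 := congrArg Prod.fst hsw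
  have e2 : (s.2 : ℝ) = y * w.2 := congrArg Prod.snd hsw
  have habR : (a : ℝ) * w.1 + b * w.2 = 1 := by exact_mod_cast hab
  have ey : y = ((a * s.1 + b * s.2 : ℤ) : ℝ) := by
    push_cast; rw [e1, e2]; linear_combination -y * habR
  refine ⟨a * s.1 + b * s.2, ?_, w, hw, ?_⟩
  · rw [ey] at hy; exact_mod_cast hy
  · rw [ey] at e1 e2
    ext
    · exact_mod_cast e1
    · exact_mod_cast e2

/-- support function of a finite set containing the origin -/
def hT (T : Finset (ℤ × ℤ)) (h0 : (0, 0) ∈ T) (w : ℤ × ℤ) : ℤ := T.sup' ⟨_, h0⟩ (dotZ w)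

lemma le_hT {T : Finset (ℤ × ℤ)} (h0 : (0, 0) ∈ T) (w : ℤ × ℤ) {m} (hm : m ∈ T) :
    dotZ w m ≤ hT T h0 w := Finset.le_sup' (dotZ w) hm

lemma exists_hT {T : Finset (ℤ × ℤ)} (h0 : (0, 0) ∈ T) (w : ℤ × ℤ) :
    ∃ m ∈ T, hT T h0 w = dotZ w m := Finset.exists_mem_eq_sup' _ _

lemma hT_sup {T : Finset (ℤ × ℤ)} (h0 : (0, 0) ∈ T) (hnn : ∀ m ∈ T, 0 ≤ m.1 ∧ 0 ≤ m.2) :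
    IsSup (hT T h0) := by
  refine ⟨fun w h1 h2 => ?_, fun w => ?_⟩
  · apply le_antisymm
    · obtain ⟨m, hm, e⟩ := exists_hT h0 w
      rw [e, dotZ]
      have := hnn m hm
      nlinarith [mul_nonneg (neg_nonneg.2 h1) this.1, mul_nonneg (neg_nonneg.2 h2) this.2]
    · simpa [dotZ] using le_hT h0 w h0
  · obtain ⟨m, hm, e⟩ := exists_hT h0 w
    exact ⟨m, (hnn m hm).1, (hnn m hm).2, e.symm, fun w' => le_hT h0 w' hm⟩

def toR (m : ℤ × ℤ) : ℝ × ℝ := ((m.1 : ℝ), (m.2 : ℝ))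

def dotR (w : ℝ × ℝ) (z : ℝ × ℝ) : ℝ := w.1 * z.1 + w.2 * z.2

lemma hull_eq_polyR {T : Finset (ℤ × ℤ)} (h0 : (0, 0) ∈ T) (hnn : ∀ m ∈ T, 0 ≤ m.1 ∧ 0 ≤ m.2)
    (n : ℕ) (hn : ∀ β ∈ T, ∀ β' ∈ T, |β.1 - β'.1| + |β.2 - β'.2| ≤ n) :
    convexHull ℝ (toR '' (T : Set (ℤ × ℤ))) = polyR n (hT T h0) := by
  apply subset_antisymm
  · apply convexHull_min
    · rintro _ ⟨m, hm, rfl⟩ w hw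
      have := le_hT h0 w hm
      simp only [toR]
      rw [dotZ] at this
      exact_mod_cast this
    · intro x hx y hy a b ha hb hab w hw
      have h1 := mul_le_mul_of_nonneg_left (hx w hw) ha
      have h2 := mul_le_mul_of_nonneg_left (hy w hw) hb
      simp only [Prod.fst_add, Prod.snd_add, Prod.smul_fst, Prod.smul_snd, smul_eq_mul]
      have : (hT T h0 w : ℝ) = a * hT T h0 w + b * hT T h0 w := by rw [← add_mul, hab, one_mul]
      rw [this]; linarith
  · intro z hz
    by_contra hzn
    have hfin : (toR '' (T : Set (ℤ × ℤ))).Finite := T.finite_toSet.image _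
    obtain ⟨φ, u, hu1, hu2⟩ := geometric_hahn_banach_closed_point (convex_convexHull ℝ _)
      (hfin.isClosed_convexHull ℝ) hzn
    set ω : ℝ × ℝ := (φ (1, 0), φ (0, 1)) with hω
    have hφ : ∀ y : ℝ × ℝ, φ y = dotR ω y := by
      intro y
      have : y = y.1 • ((1 : ℝ), (0 : ℝ)) + y.2 • ((0 : ℝ), (1 : ℝ)) := by ext <;> simp
      conv_lhs => rw [this]
      rw [map_add, map_smul, map_smul]
      simp [dotR, hω, mul_comm]
    have hsep : ∀ m ∈ T, dotR ω (toR m) < dotR ω z := by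
      intro m hm
      rw [← hφ, ← hφ]
      exact (hu1 _ (subset_convexHull ℝ _ ⟨m, hm, rfl⟩)).trans hu2
    have hz1 : 0 ≤ z.1 := by
      have := hz (-1, 0) (by simp [rays])
      rw [(hT_sup h0 hnn).neg _ (by simp) (by simp)] at this
      simpa using this
    have hz2 : 0 ≤ z.2 := by
      have := hz (0, -1) (by simp [rays])
      rw [(hT_sup h0 hnn).neg _ (by simp) (by simp)] at this
      simpa using this
    -- directions coming from rays
    have good1 : ∀ s : ℝ × ℝ, ∀ y : ℝ, 0 < y → ∀ w ∈ rays n, s = (y * w.1, y * w.2) →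
        ∀ β ∈ T, (∀ γ ∈ T, dotR s (toR γ) ≤ dotR s (toR β)) → dotR s z ≤ dotR s (toR β) := by
      rintro s y hy w hw rfl β hβ hmax
      have h1 := hz w hw
      obtain ⟨m, hm, e⟩ := exists_hT h0 w
      have h2 := hmax m hm
      have e' : (hT T h0 w : ℝ) = w.1 * m.1 + w.2 * m.2 := by rw [e, dotZ]; push_cast; ring
      rw [e'] at h1
      have h3 := mul_le_mul_of_nonneg_left h1 hy.le
      simp only [dotR, toR] at *
      linarith
    have good2 : ∀ s : ℝ × ℝ, s.1 ≤ 0 → s.2 ≤ 0 →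
        ∀ β ∈ T, (∀ γ ∈ T, dotR s (toR γ) ≤ dotR s (toR β)) → dotR s z ≤ dotR s (toR β) := by
      intro s h1 h2 β hβ hmax
      have := hmax _ h0
      simp only [dotR, toR] at *
      simp at this
      nlinarith [mul_nonneg (neg_nonneg.2 h1) hz1, mul_nonneg (neg_nonneg.2 h2) hz2]
    have good3 : ∀ s : ℝ × ℝ, ∀ β₁ ∈ T, ∀ β₂ ∈ T, β₁ ≠ β₂ → dotR s (toR β₁) = dotR s (toR β₂) →
        ∀ β ∈ T, (∀ γ ∈ T, dotR s (toR γ) ≤ dotR s (toR β)) → dotR s z ≤ dotR s (toR β) := by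
      intro s β₁ h1 β₂ h2 hne he
      by_cases hs : 0 < s.1 ∨ 0 < s.2
      · obtain ⟨y, hy, w, hw, -, e⟩ := ray_real n s (β₁ - β₂) (sub_ne_zero.2 hne)
          (by simpa using hn _ h1 _ h2) (by simp [dotR, toR] at he ⊢; linarith) hs
        exact good1 s y hy w hw e
      · push Not at hs
        exact good2 s hs.1 hs.2
    have uniq : ∀ β₁ ∈ T, ∀ β₂ ∈ T, (∀ γ ∈ T, dotR ω (toR γ) ≤ dotR ω (toR β₁)) →
        (∀ γ ∈ T, dotR ω (toR γ) ≤ dotR ω (toR β₂)) → β₁ = β₂ := by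
      intro β₁ h1 β₂ h2 m1 m2
      by_contra hne
      have := good3 ω β₁ h1 β₂ h2 hne (le_antisymm (m2 _ h1) (m1 _ h2)) β₁ h1 m1
      linarith [hsep β₁ h1]
    have step : ∀ e : ℝ × ℝ, (∀ β ∈ T, (∀ γ ∈ T, dotR e (toR γ) ≤ dotR e (toR β)) →
          dotR e z ≤ dotR e (toR β)) → ∃ β ∈ T, (∀ γ ∈ T, dotR ω (toR γ) ≤ dotR ω (toR β)) ∧
          dotR e z ≤ dotR e (toR β) := by
      intro e he
      obtain ⟨β, hβ, hmax, h | ⟨β', hβ', p1, p2, hm⟩⟩ := two_max T ⟨_, h0⟩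
        (fun m => dotR ω (toR m)) (fun m => dotR e (toR m))
      · exact ⟨β, hβ, hmax, he β hβ h⟩
      · refine ⟨β, hβ, hmax, ?_⟩
        set x := dotR e (toR β') - dotR e (toR β)
        set t := dotR ω (toR β) - dotR ω (toR β')
        have hs : ∀ y, dotR (x * ω.1 + t * e.1, x * ω.2 + t * e.2) y = x * dotR ω y + t * dotR e y := by
          intro y; simp only [dotR]; ring
        have hne : β ≠ β' := by rintro rfl; simp [x] at p1
        have := good3 (x * ω.1 + t * e.1, x * ω.2 + t * e.2) β hβ β' hβ' hne
          (by rw [hs, hs]; simp only [x, t]; ring) β hβ (by intro γ hγ; rw [hs, hs]; exact hm γ hγ)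
        rw [hs, hs] at this
        have h1 := mul_lt_mul_of_pos_left (hsep β hβ) p1
        have h2 : t * dotR e z < t * dotR e (toR β) := by linarith
        exact (lt_of_mul_lt_mul_left h2 p2.le).le
    obtain ⟨β₁, hβ₁, m1, k1⟩ := step (ω.1, 0) (by
      rcases le_or_gt ω.1 0 with h | h
      · exact good2 _ h le_rfl
      · exact good1 _ ω.1 h (1, 0) (by simp [rays]) (by simp))
    obtain ⟨β₂, hβ₂, m2, k2⟩ := step (0, ω.2) (by
      rcases le_or_gt ω.2 0 with h | h
      · exact good2 _ le_rfl h
      · exact good1 _ ω.2 h (0, 1) (by simp [rays]) (by simp))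
    obtain rfl := uniq _ hβ₁ _ hβ₂ m1 m2
    have := hsep _ hβ₁
    simp only [dotR] at this k1 k2
    linarith

/-- integer exponent -/
def ez (m : Fin 2 →₀ ℕ) : ℤ × ℤ := ((m 0 : ℤ), (m 1 : ℤ))

lemma ez_inj : Function.Injective ez := by
  intro a b h
  simp only [ez, Prod.mk.injEq, Nat.cast_inj] at h
  ext i; fin_cases i
  · exact h.1
  · exact h.2

lemma ez_add (a b) : ez (a + b) = ez a + ez b := by simp [ez]

/-- support together with the origin -/
def S0 (f : P2) : Finset (ℤ × ℤ) := by
  classical exact insert (0, 0) (f.support.image ez)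

lemma mem_S0 (f : P2) (x) : x ∈ S0 f ↔ x = (0, 0) ∨ ∃ m ∈ f.support, ez m = x := by
  simp only [S0, Finset.mem_insert, Finset.mem_image]

lemma zero_mem_S0 (f : P2) : (0, 0) ∈ S0 f := by simp [mem_S0]

lemma S0_nonneg (f : P2) : ∀ m ∈ S0 f, 0 ≤ m.1 ∧ 0 ≤ m.2 := by
  intro m hm
  rw [mem_S0] at hm
  rcases hm with rfl | ⟨m, _, rfl⟩
  · simp
  · simp [ez]

def hA (f : P2) : ℤ × ℤ → ℤ := hT (S0 f) (zero_mem_S0 f)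

lemma hA_sup (f : P2) : IsSup (hA f) := hT_sup _ (S0_nonneg f)

lemma newton_eq (f : P2) (n : ℕ) (hn : ∀ β ∈ S0 f, ∀ β' ∈ S0 f, |β.1 - β'.1| + |β.2 - β'.2| ≤ n) :
    newton f = polyR n (hA f) := by
  rw [hA, ← hull_eq_polyR _ (S0_nonneg f) n hn, newton]
  congr 1
  ext p
  simp only [Set.mem_union, Set.mem_singleton_iff, Set.mem_ofPred_eq, Set.mem_image, Finset.mem_coe,
    mem_S0]
  constructor
  · rintro (rfl | ⟨m, hm, rfl⟩)
    · exact ⟨_, Or.inl rfl, by simp [toR]⟩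
    · exact ⟨_, Or.inr ⟨m, hm, rfl⟩, by simp [toR, ez]⟩
  · rintro ⟨_, rfl | ⟨m, hm, rfl⟩, rfl⟩
    · left; simp [toR]
    · exact Or.inr ⟨m, hm, by simp [toR, ez]⟩

lemma exists_diam (f : P2) : ∃ n0 : ℕ, ∀ n ≥ n0, ∀ β ∈ S0 f, ∀ β' ∈ S0 f,
    |β.1 - β'.1| + |β.2 - β'.2| ≤ (n : ℤ) := by
  refine ⟨(∑ β ∈ S0 f, ∑ β' ∈ S0 f, (|β.1 - β'.1| + |β.2 - β'.2|)).toNat, ?_⟩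
  intro n hn β hβ β' hβ'
  have h1 : (∑ β ∈ S0 f, ∑ β' ∈ S0 f, (|β.1 - β'.1| + |β.2 - β'.2|)) ≤ (n : ℤ) := by omega
  refine le_trans ?_ h1
  refine le_trans ?_ (Finset.single_le_sum (f := fun β : ℤ × ℤ => ∑ β' ∈ S0 f, (|β.1 - β'.1| + |β.2 - β'.2|))
    (fun i _ => Finset.sum_nonneg fun j _ => by positivity) hβ)
  exact Finset.single_le_sum (f := fun β' : ℤ × ℤ => (|β.1 - β'.1| + |β.2 - β'.2|))
    (fun i _ => by positivity) hβ'

lemma dotZ_add (w a b) : dotZ w (a + b) = dotZ w a + dotZ w b := by simp [dotZ]; ring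

/-- the `w`-homogeneous part of weight `d` -/
def tp (w : ℤ × ℤ) (d : ℤ) : P2 →ₗ[ℂ] P2 := weightedHomogeneousComponent ![w.1, w.2] d

lemma coeff_tp (w : ℤ × ℤ) (d : ℤ) (u : P2) (m) :
    coeff m (tp w d u) = if dotZ w (ez m) = d then coeff m u else 0 := by
  classical
  rw [tp, coeff_weightedHomogeneousComponent]
  have : Finsupp.weight ![w.1, w.2] m = dotZ w (ez m) := by
    rw [Finsupp.weight_apply, Finsupp.sum_fintype _ _ (by simp)]
    simp [dotZ, ez, mul_comm]
  rw [this]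

/-- all weights are at most `d` -/
def wle (w : ℤ × ℤ) (d : ℤ) (p : P2) : Prop := ∀ m, coeff m p ≠ 0 → dotZ w (ez m) ≤ d

lemma wle.mono {w : ℤ × ℤ} {d e : ℤ} {p : P2} (h : wle w d p) (hde : d ≤ e) : wle w e p :=
  fun m hm => (h m hm).trans hde

lemma wle.of_tp {w : ℤ × ℤ} {d : ℤ} {p : P2} (h : wle w d p) (w' : ℤ × ℤ) (e : ℤ) :
    wle w d (tp w' e p) := by
  intro m hm
  rw [coeff_tp] at hm
  split_ifs at hm
  · exact h m hm
  · simp at hm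

lemma wle.add {w : ℤ × ℤ} {d : ℤ} {p q : P2} (hp : wle w d p) (hq : wle w d q) :
    wle w d (p + q) := by
  intro m hm
  rw [coeff_add] at hm
  by_cases h : coeff m p = 0
  · exact hq m (by simpa [h] using hm)
  · exact hp m h

lemma wle.neg {w : ℤ × ℤ} {d : ℤ} {p : P2} (hp : wle w d p) : wle w d (-p) := by
  intro m hm
  rw [coeff_neg] at hm
  exact hp m (by simpa using hm)

lemma wle.sub {w : ℤ × ℤ} {d : ℤ} {p q : P2} (hp : wle w d p) (hq : wle w d q) :
    wle w d (p - q) := by rw [sub_eq_add_neg]; exact hp.add hq.neg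

lemma exists_of_coeff_mul {p q : P2} {m} (h : coeff m (p * q) ≠ 0) :
    ∃ i j, coeff i p ≠ 0 ∧ coeff j q ≠ 0 ∧ m = i + j := by
  classical
  rw [coeff_mul] at h
  obtain ⟨x, hx, hne⟩ := Finset.exists_ne_zero_of_sum_ne_zero h
  exact ⟨x.1, x.2, left_ne_zero_of_mul hne, right_ne_zero_of_mul hne,
    (Finset.HasAntidiagonal.mem_antidiagonal.1 hx).symm⟩

lemma wle.mul {w : ℤ × ℤ} {d e : ℤ} {p q : P2} (hp : wle w d p) (hq : wle w e q) :
    wle w (d + e) (p * q) := by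
  intro m hm
  obtain ⟨i, j, hi, hj, rfl⟩ := exists_of_coeff_mul hm
  rw [ez_add, dotZ_add]
  exact add_le_add (hp i hi) (hq j hj)

lemma tp_mul {w : ℤ × ℤ} {d e : ℤ} {p q : P2} (hp : wle w d p) (hq : wle w e q) :
    tp w (d + e) (p * q) = tp w d p * tp w e q := by
  classical
  ext m
  rw [coeff_tp, coeff_mul, coeff_mul]
  have e0 : (if dotZ w (ez m) = d + e then
      ∑ x ∈ Finset.HasAntidiagonal.antidiagonal m, coeff x.1 p * coeff x.2 q else 0) =
      ∑ x ∈ Finset.HasAntidiagonal.antidiagonal m,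
        if dotZ w (ez m) = d + e then coeff x.1 p * coeff x.2 q else 0 := by
    split_ifs <;> simp
  rw [e0]
  refine Finset.sum_congr rfl fun x hx => ?_
  rw [coeff_tp, coeff_tp]
  have hx' := Finset.HasAntidiagonal.mem_antidiagonal.1 hx
  have hd : dotZ w (ez m) = dotZ w (ez x.1) + dotZ w (ez x.2) := by
    rw [← hx', ez_add, dotZ_add]
  by_cases h1 : coeff x.1 p = 0
  · simp [h1]
  by_cases h2 : coeff x.2 q = 0
  · simp [h2]
  have k1 := hp _ h1
  have k2 := hq _ h2
  by_cases h3 : dotZ w (ez x.1) = d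
  · by_cases h4 : dotZ w (ez x.2) = e
    · rw [if_pos h3, if_pos h4, if_pos (by omega)]
    · rw [if_neg h4, if_neg (by omega), mul_zero]
  · rw [if_neg h3, if_neg (by omega), zero_mul]

lemma tp_eq_zero {w : ℤ × ℤ} {d e : ℤ} {p : P2} (hp : wle w e p) (h : e < d) : tp w d p = 0 := by
  ext m
  rw [coeff_tp, coeff_zero]
  split_ifs with h1
  · by_contra h2
    have := hp m h2
    omega
  · rfl

lemma wle.lt_of_tp {w : ℤ × ℤ} {d : ℤ} {p : P2} (hp : wle w d p) (h : tp w d p = 0) :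
    wle w (d - 1) p := by
  intro m hm
  have h1 := hp m hm
  have h2 : coeff m (tp w d p) = 0 := by rw [h, coeff_zero]
  rw [coeff_tp] at h2
  by_contra hc
  rw [if_pos (by omega)] at h2
  exact hm h2

lemma tp_tp (w : ℤ × ℤ) (d : ℤ) (p : P2) : tp w d (tp w d p) = tp w d p := by
  ext m
  simp only [coeff_tp]
  split_ifs <;> rfl

lemma exists_top {p : P2} (hp : p ≠ 0) (w : ℤ × ℤ) :
    ∃ i, coeff i p ≠ 0 ∧ wle w (dotZ w (ez i)) p := by
  obtain ⟨i, hi, hmax⟩ := p.support.exists_max_image (fun i => dotZ w (ez i))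
    (by rwa [Finset.nonempty_iff_ne_empty, Ne, support_eq_empty])
  exact ⟨i, mem_support_iff.1 hi, fun m hm => hmax m (mem_support_iff.2 hm)⟩

/-- multiplicativity of top weights -/
lemma mult {p q : P2} {m β} (hm : coeff m p ≠ 0) (hβ : coeff β q ≠ 0) (w : ℤ × ℤ) :
    ∃ m', coeff m' (p * q) ≠ 0 ∧ dotZ w (ez m) + dotZ w (ez β) ≤ dotZ w (ez m') := by
  have hp : p ≠ 0 := by rintro rfl; simp at hm
  have hq : q ≠ 0 := by rintro rfl; simp at hβ
  obtain ⟨i, hi, hi'⟩ := exists_top hp w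
  obtain ⟨j, hj, hj'⟩ := exists_top hq w
  have h := tp_mul hi' hj'
  have h1 : tp w (dotZ w (ez i)) p ≠ 0 := by
    intro h0
    have := congrArg (coeff i) h0
    rw [coeff_tp, if_pos rfl, coeff_zero] at this
    exact hi this
  have h2 : tp w (dotZ w (ez j)) q ≠ 0 := by
    intro h0
    have := congrArg (coeff j) h0
    rw [coeff_tp, if_pos rfl, coeff_zero] at this
    exact hj this
  obtain ⟨m', hm'⟩ := ne_zero_iff.1 (mul_ne_zero h1 h2)
  rw [← h, coeff_tp] at hm'
  split_ifs at hm' with hd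
  · exact ⟨m', hm', by rw [hd]; exact add_le_add (hi' _ hm) (hj' _ hβ)⟩
  · simp at hm'

lemma wle.of_mul {w : ℤ × ℤ} {d : ℤ} {p q : P2} {β} (h : wle w d (p * q)) (hβ : coeff β q ≠ 0) :
    wle w (d - dotZ w (ez β)) p := by
  intro m hm
  obtain ⟨m', h1, h2⟩ := mult hm hβ w
  have := h m' h1
  omega

lemma wle_hA (f : P2) (w : ℤ × ℤ) : wle w (hA f w) f := by
  intro m hm
  exact le_hT _ _ ((mem_S0 f _).2 (Or.inr ⟨m, mem_support_iff.2 hm, rfl⟩))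

/-- In the relevant directions the face does not see the added origin. -/
lemma hA_face {f : P2} (hf : QuasiConvenient f) {w : ℤ × ℤ} (hw : 0 < w.1 ∨ 0 < w.2)
    {β} (hβ : β ∈ S0 f) (hm : hA f w ≤ dotZ w β) : ∃ m, coeff m f ≠ 0 ∧ ez m = β := by
  rcases (mem_S0 f _).1 hβ with rfl | ⟨m, hm', rfl⟩
  · refine ⟨0, ?_, by simp [ez]⟩
    obtain ⟨⟨a, ha⟩, ⟨b, hb⟩⟩ := hf
    have h1 := wle_hA f w _ ha
    have h2 := wle_hA f w _ hb
    simp [dotZ, ez] at h1 h2 hm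
    rcases hw with hw | hw
    · have : a = 0 := by
        by_contra h
        have : (0 : ℤ) < a := by omega
        nlinarith [mul_pos hw this]
      simpa [this] using ha
    · have : b = 0 := by
        by_contra h
        have : (0 : ℤ) < b := by omega
        nlinarith [mul_pos hw this]
      simpa [this] using hb
  · exact ⟨m, mem_support_iff.1 hm', rfl⟩

lemma hA_att {f : P2} (hf : QuasiConvenient f) {w : ℤ × ℤ} (hw : 0 < w.1 ∨ 0 < w.2) :
    ∃ m, coeff m f ≠ 0 ∧ dotZ w (ez m) = hA f w := by
  obtain ⟨β, hβ, e⟩ := exists_hT (zero_mem_S0 f) w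
  obtain ⟨m, hm, rfl⟩ := hA_face hf hw hβ e.le
  exact ⟨m, hm, e.symm⟩

lemma hA_mul {f g : P2} (hf : QuasiConvenient f) (hg : QuasiConvenient g) (w : ℤ × ℤ) :
    hA (f * g) w = hA f w + hA g w := by
  by_cases hw : 0 < w.1 ∨ 0 < w.2
  · apply le_antisymm
    · obtain ⟨β, hβ, e⟩ := exists_hT (zero_mem_S0 (f * g)) w
      rw [hA, e]
      rcases (mem_S0 _ _).1 hβ with rfl | ⟨m, hm, rfl⟩
      · have := (hA_sup f).nonneg w
        have := (hA_sup g).nonneg w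
        simp [dotZ]; omega
      · exact (wle_hA f w).mul (wle_hA g w) m (mem_support_iff.1 hm)
    · obtain ⟨m, hm, e⟩ := hA_att hf hw
      obtain ⟨k, hk, e'⟩ := hA_att hg hw
      obtain ⟨m', h1, h2⟩ := mult hm hk w
      have := wle_hA (f * g) w m' h1
      omega
  · push Not at hw
    rw [(hA_sup _).neg w hw.1 hw.2, (hA_sup _).neg w hw.1 hw.2, (hA_sup _).neg w hw.1 hw.2]; rfl

/-- polynomials supported in the polygon -/
def VV (n : ℕ) (h : ℤ × ℤ → ℤ) : Submodule ℂ P2 := restrictSupport ℂ {m | ez m ∈ latS n h}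

lemma mem_VV {n : ℕ} {h : ℤ × ℤ → ℤ} {u : P2} : u ∈ VV n h ↔ ∀ w ∈ rays n, wle w (h w) u := by
  rw [VV, mem_restrictSupport_iff]
  constructor
  · intro H w hw m hm
    exact H (mem_support_iff.2 hm) w hw
  · intro H m hm w hw
    exact H w hw m (mem_support_iff.1 hm)

lemma wle_neg {h : ℤ × ℤ → ℤ} (hh : IsSup h) {w : ℤ × ℤ} (hw : ¬ (0 < w.1 ∨ 0 < w.2)) (u : P2) :
    wle w (h w) u := by
  push Not at hw
  intro m _
  rw [hh.neg w hw.1 hw.2]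
  have h1 : (0 : ℤ) ≤ (m 0 : ℤ) := by positivity
  have h2 : (0 : ℤ) ≤ (m 1 : ℤ) := by positivity
  simp only [dotZ, ez]
  nlinarith [mul_nonneg (neg_nonneg.2 hw.1) h1, mul_nonneg (neg_nonneg.2 hw.2) h2]

lemma VV_fin {h : ℤ × ℤ → ℤ} (hh : IsSup h) (n : ℕ) :
    Module.Finite ℂ (VV n h) ∧ Module.finrank ℂ (VV n h) = (latS n h).ncard := by
  have himg : ez '' {m | ez m ∈ latS n h} = latS n h := by
    ext x
    constructor
    · rintro ⟨m, hm, rfl⟩; exact hm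
    · intro hx
      have h1 := hx (-1, 0) (by simp [rays])
      have h2 := hx (0, -1) (by simp [rays])
      rw [hh.neg _ (by simp) (by simp)] at h1 h2
      simp [dotZ] at h1 h2
      have e : ez (Finsupp.single 0 x.1.toNat + Finsupp.single 1 x.2.toNat) = x := by
        simp [ez, h1, h2]
      exact ⟨_, by rw [Set.mem_ofPred_eq, e]; exact hx, e⟩
  have hfin : {m | ez m ∈ latS n h}.Finite :=
    (latS_card hh n).1.preimage ez_inj.injOn
  have := hfin.to_subtype
  constructor
  · exact Module.Finite.of_basis (basisRestrictSupport ℂ {m | ez m ∈ latS n h})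
  · rw [VV, Module.finrank_eq_nat_card_basis (basisRestrictSupport ℂ {m | ez m ∈ latS n h}),
      Nat.card_coe_set_eq, ← Set.ncard_image_of_injective _ ez_inj, himg]

def triS (d : ℤ × ℤ) : Finset (ℤ × ℤ) := {(0, 0), (d.1, 0), (0, d.2)}
def segS (d : ℤ × ℤ) : Finset (ℤ × ℤ) := {(0, 0), d}
def tri (d : ℤ × ℤ) : ℤ × ℤ → ℤ := hT (triS d) (by simp [triS])
def seg (d : ℤ × ℤ) : ℤ × ℤ → ℤ := hT (segS d) (by simp [segS])

lemma tri_sup {d : ℤ × ℤ} (h1 : 0 ≤ d.1) (h2 : 0 ≤ d.2) : IsSup (tri d) := by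
  apply hT_sup
  intro m hm
  simp only [triS, Finset.mem_insert, Finset.mem_singleton] at hm
  rcases hm with rfl | rfl | rfl <;> simp [h1, h2]

lemma seg_sup {d : ℤ × ℤ} (h1 : 0 ≤ d.1) (h2 : 0 ≤ d.2) : IsSup (seg d) := by
  apply hT_sup
  intro m hm
  simp only [segS, Finset.mem_insert, Finset.mem_singleton] at hm
  rcases hm with rfl | rfl <;> simp [h1, h2]

lemma tri_ge (d w : ℤ × ℤ) : 0 ≤ tri d w ∧ w.1 * d.1 ≤ tri d w ∧ w.2 * d.2 ≤ tri d w := by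
  have h0 : (0, 0) ∈ triS d := by simp [triS]
  refine ⟨?_, ?_, ?_⟩
  · simpa [dotZ, tri] using le_hT h0 w h0
  · simpa [dotZ, tri] using le_hT h0 w (m := (d.1, 0)) (by simp [triS])
  · simpa [dotZ, tri] using le_hT h0 w (m := (0, d.2)) (by simp [triS])

lemma tri_cases (d w : ℤ × ℤ) : tri d w = 0 ∨ tri d w = w.1 * d.1 ∨ tri d w = w.2 * d.2 := by
  have h0 : (0, 0) ∈ triS d := by simp [triS]
  obtain ⟨m, hm, e⟩ := exists_hT h0 w
  rw [tri, e]
  simp only [triS, Finset.mem_insert, Finset.mem_singleton] at hm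
  rcases hm with rfl | rfl | rfl <;> simp [dotZ]

lemma seg_ge (d w : ℤ × ℤ) : 0 ≤ seg d w ∧ dotZ w d ≤ seg d w := by
  have h0 : (0, 0) ∈ segS d := by simp [segS]
  refine ⟨?_, ?_⟩
  · simpa [dotZ, seg] using le_hT h0 w h0
  · exact le_hT h0 w (m := d) (by simp [segS])

lemma seg_cases (d w : ℤ × ℤ) : seg d w = 0 ∨ seg d w = dotZ w d := by
  have h0 : (0, 0) ∈ segS d := by simp [segS]
  obtain ⟨m, hm, e⟩ := exists_hT h0 w
  rw [seg, e]
  simp only [segS, Finset.mem_insert, Finset.mem_singleton] at hm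
  rcases hm with rfl | rfl <;> simp [dotZ]

def DD (g : P2) : Finset (ℤ × ℤ) := by
  classical
  exact (S0 g ×ˢ S0 g).image (fun b => (|b.1.1 - b.2.1|, |b.1.2 - b.2.2|))

def HH (g : P2) (w : ℤ × ℤ) : ℤ := tri (1, 1) w + ∑ d ∈ DD g, (tri d w + seg d w)

lemma DD_nonneg (g : P2) {d} (hd : d ∈ DD g) : 0 ≤ d.1 ∧ 0 ≤ d.2 := by
  simp only [DD, Finset.mem_image] at hd
  obtain ⟨b, -, rfl⟩ := hd
  exact ⟨abs_nonneg _, abs_nonneg _⟩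

lemma HH_sup (g : P2) : IsSup (HH g) :=
  (tri_sup (by simp) (by simp)).add (IsSup.sum _ _ fun d hd =>
    (tri_sup (DD_nonneg g hd).1 (DD_nonneg g hd).2).add
      (seg_sup (DD_nonneg g hd).1 (DD_nonneg g hd).2))

lemma HH_pos (g : P2) {w : ℤ × ℤ} (hw : 0 < w.1 ∨ 0 < w.2) : 0 < HH g w := by
  have h1 := tri_ge (1, 1) w
  have h2 : 0 ≤ ∑ d ∈ DD g, (tri d w + seg d w) :=
    Finset.sum_nonneg fun d _ => add_nonneg (tri_ge d w).1 (seg_ge d w).1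
  simp only [HH]
  simp only [mul_one] at h1
  omega

lemma HH_strict (g : P2) {β β' : ℤ × ℤ} (hβ : β ∈ S0 g) (hβ' : β' ∈ S0 g) {w0 w' s : ℤ × ℤ}
    {x z : ℤ} (hx : 0 < x) (hz : 0 < z) (hw0 : 0 < w0.1 ∨ 0 < w0.2)
    (s1 : x * w0.1 + z * w'.1 = s.1) (s2 : x * w0.2 + z * w'.2 = s.2)
    (hs : dotZ s (β' - β) = 0) (h0 : dotZ w0 (β' - β) < 0) (h' : 0 < dotZ w' (β' - β)) :
    HH g s < x * HH g w0 + z * HH g w' := by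
  set δ := β' - β with hδ
  have comb : ∀ h : ℤ × ℤ → ℤ, IsSup h → h s ≤ x * h w0 + z * h w' := by
    intro h hh
    have := hh.comb (u := w0) (v := w') (w := s) (z := 1) hx.le hz.le (by simp) (by simpa) (by simpa)
    simpa using this
  have hd : (|δ.1|, |δ.2|) ∈ DD g := by
    simp only [DD, Finset.mem_image]
    exact ⟨(β', β), by simp [hβ, hβ'], by simp [hδ]⟩
  have h1 := comb _ (tri_sup (d := (1, 1)) (by simp) (by simp))
  have h2 : ∑ d ∈ DD g, (tri d s + seg d s) <
      ∑ d ∈ DD g, (x * (tri d w0 + seg d w0) + z * (tri d w' + seg d w')) := by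
    apply Finset.sum_lt_sum
    · intro d hd
      exact comb (fun w => tri d w + seg d w)
        ((tri_sup (DD_nonneg g hd).1 (DD_nonneg g hd).2).add
          (seg_sup (DD_nonneg g hd).1 (DD_nonneg g hd).2))
    · refine ⟨_, hd, ?_⟩
      have c1 := comb _ (tri_sup (d := (|δ.1|, |δ.2|)) (abs_nonneg _) (abs_nonneg _))
      have c2 := comb _ (seg_sup (d := (|δ.1|, |δ.2|)) (abs_nonneg _) (abs_nonneg _))
      suffices H : tri (|δ.1|, |δ.2|) s < x * tri (|δ.1|, |δ.2|) w0 + z * tri (|δ.1|, |δ.2|) w' ∨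
          seg (|δ.1|, |δ.2|) s < x * seg (|δ.1|, |δ.2|) w0 + z * seg (|δ.1|, |δ.2|) w' by
        rcases H with H | H <;> linarith
      have t0 := tri_ge (|δ.1|, |δ.2|) w0
      have t1 := tri_ge (|δ.1|, |δ.2|) w'
      have t2 := tri_cases (|δ.1|, |δ.2|) s
      have g0 := seg_ge (|δ.1|, |δ.2|) w0
      have g1 := seg_ge (|δ.1|, |δ.2|) w'
      have g2 := seg_cases (|δ.1|, |δ.2|) s
      set tt := tri (|δ.1|, |δ.2|)
      set ss := seg (|δ.1|, |δ.2|)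
      obtain ⟨i, j⟩ := δ
      obtain ⟨p0, q0⟩ := w0
      obtain ⟨p', q'⟩ := w'
      obtain ⟨a, b⟩ := s
      simp only [dotZ] at *
      subst s1 s2
      rcases le_or_gt 0 i with hi | hi <;> rcases le_or_gt 0 j with hj | hj
      · right
        rw [abs_of_nonneg hi, abs_of_nonneg hj] at *
        have e : ss (x * p0 + z * p', x * q0 + z * q') = 0 := by
          rcases g2 with g2 | g2 <;> [exact g2; rw [g2, hs]]
        rw [e]
        have := mul_nonneg hx.le g0.1
        have := mul_pos hz (lt_of_lt_of_le h' g1.2)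
        linarith
      · left
        rw [abs_of_nonneg hi, abs_of_neg hj] at *
        have hi' : 0 ≤ i := hi
        have k0 : 0 < q0 * -j := by
          rcases hw0 with hw | hw
          · nlinarith [mul_nonneg hw.le hi]
          · nlinarith
        have m1 := mul_le_mul_of_nonneg_left t0.2.2 hx.le
        have m2 := mul_le_mul_of_nonneg_left t1.2.1 hz.le
        have m3 := mul_nonneg hz.le t1.1
        have m4 := mul_pos hx k0
        have m5 := mul_pos_of_neg_of_neg (neg_lt_zero.2 hx) h0
        rcases t2 with t2 | t2 | t2 <;> rw [t2] <;> nlinarith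
      · left
        rw [abs_of_neg hi, abs_of_nonneg hj] at *
        have k0 : 0 < p0 * -i := by
          rcases hw0 with hw | hw
          · nlinarith
          · nlinarith [mul_nonneg hw.le hj]
        have m1 := mul_le_mul_of_nonneg_left t0.2.1 hx.le
        have m2 := mul_le_mul_of_nonneg_left t1.2.2 hz.le
        have m3 := mul_nonneg hz.le t1.1
        have m4 := mul_pos hx k0
        have m5 := mul_pos_of_neg_of_neg (neg_lt_zero.2 hx) h0
        rcases t2 with t2 | t2 | t2 <;> rw [t2] <;> nlinarith
      · right
        rw [abs_of_neg hi, abs_of_neg hj] at *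
        have e : ss (x * p0 + z * p', x * q0 + z * q') = 0 := by
          rcases g2 with g2 | g2 <;> [exact g2; (rw [g2]; linarith)]
        rw [e]
        have := mul_nonneg hz.le g1.1
        have : 0 < x * ss (p0, q0) := mul_pos hx (lt_of_lt_of_le (by linarith) g0.2)
        linarith
  have h3 : ∑ d ∈ DD g, (x * (tri d w0 + seg d w0) + z * (tri d w' + seg d w')) =
      x * ∑ d ∈ DD g, (tri d w0 + seg d w0) + z * ∑ d ∈ DD g, (tri d w' + seg d w') := by
    rw [Finset.sum_add_distrib, Finset.mul_sum, Finset.mul_sum]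
  simp only [HH]
  rw [h3] at h2
  linarith

/-- `(u, v) ↦ u f + v g` -/
def PhiMap (f g : P2) : P2 × P2 →ₗ[ℂ] P2 :=
  (LinearMap.mulRight ℂ f).comp (LinearMap.fst ℂ P2 P2) +
    (LinearMap.mulRight ℂ g).comp (LinearMap.snd ℂ P2 P2)

lemma PhiMap_apply (f g : P2) (x : P2 × P2) : PhiMap f g x = x.1 * f + x.2 * g := by
  simp [PhiMap]

/-- the filtered ideal -/
def II (n : ℕ) (f g : P2) (c : ℤ × ℤ → ℤ) : Submodule ℂ P2 :=
  ((VV n (fun w => c w + hA g w)).prod (VV n (fun w => c w + hA f w))).map (PhiMap f g)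

lemma mem_II {n : ℕ} {f g : P2} {c : ℤ × ℤ → ℤ} {F : P2} : F ∈ II n f g c ↔
    ∃ u ∈ VV n (fun w => c w + hA g w), ∃ v ∈ VV n (fun w => c w + hA f w), u * f + v * g = F := by
  simp only [II, Submodule.mem_map, Submodule.mem_prod, Prod.exists, PhiMap_apply]
  constructor
  · rintro ⟨u, v, ⟨hu, hv⟩, e⟩; exact ⟨u, hu, v, hv, e⟩
  · rintro ⟨u, hu, v, hv, e⟩; exact ⟨u, v, ⟨hu, hv⟩, e⟩

lemma II_le (n : ℕ) (f g : P2) (c : ℤ × ℤ → ℤ) :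
    II n f g c ≤ VV n (fun w => c w + hA f w + hA g w) := by
  intro F hF
  obtain ⟨u, hu, v, hv, rfl⟩ := mem_II.1 hF
  rw [mem_VV] at *
  intro w hw
  have h1 := (hu w hw).mul (wle_hA f w)
  have h2 := (hv w hw).mul (wle_hA g w)
  exact (h1.mono (by omega)).add (h2.mono (by omega))

lemma QuasiConvenient.ne_zero {f : P2} (hf : QuasiConvenient f) : f ≠ 0 := by
  rintro rfl
  obtain ⟨⟨a, ha⟩, -⟩ := hf
  simp at ha

lemma koszul_dim (n : ℕ) {f g : P2} (hf : QuasiConvenient f) (hg : QuasiConvenient g)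
    (hco : CoprimeDiv f g) {c : ℤ × ℤ → ℤ} (hc : IsSup c) :
    Module.finrank ℂ (II n f g c) + (latS n c).ncard =
      (latS n (fun w => c w + hA g w)).ncard + (latS n (fun w => c w + hA f w)).ncard := by
  set A := VV n (fun w => c w + hA g w) with hAd
  set B := VV n (fun w => c w + hA f w) with hBd
  have ⟨fA, cA⟩ := VV_fin (hc.add (hA_sup g)) n
  have ⟨fB, cB⟩ := VV_fin (hc.add (hA_sup f)) n
  have ⟨fC, cC⟩ := VV_fin hc n
  rw [← cA, ← cB, ← cC]
  let Φ : A × B →ₗ[ℂ] P2 :=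
    (LinearMap.mulRight ℂ f).comp (A.subtype.comp (LinearMap.fst ℂ A B)) +
    (LinearMap.mulRight ℂ g).comp (B.subtype.comp (LinearMap.snd ℂ A B))
  have hΦ : ∀ x, Φ x = (x.1 : P2) * f + (x.2 : P2) * g := by intro x; simp [Φ]
  have hrange : LinearMap.range Φ = II n f g c := by
    ext F
    rw [LinearMap.mem_range, mem_II]
    constructor
    · rintro ⟨x, rfl⟩
      exact ⟨_, x.1.2, _, x.2.2, (hΦ x).symm⟩
    · rintro ⟨u, hu, v, hv, e⟩
      exact ⟨(⟨u, hu⟩, ⟨v, hv⟩), by rw [hΦ]; exact e⟩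
  have mA : ∀ h : VV n c, (h : P2) * g ∈ A := by
    intro h
    rw [hAd, mem_VV]
    exact fun w hw => ((mem_VV.1 h.2) w hw).mul (wle_hA g w)
  have mB : ∀ h : VV n c, -((h : P2) * f) ∈ B := by
    intro h
    rw [hBd, mem_VV]
    exact fun w hw => (((mem_VV.1 h.2) w hw).mul (wle_hA f w)).neg
  let Ψ : VV n c →ₗ[ℂ] A × B :=
    { toFun := fun h => (⟨_, mA h⟩, ⟨_, mB h⟩)
      map_add' := by
        intro x y
        ext1 <;> apply Subtype.ext <;> simp <;> ring
      map_smul' := by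
        intro r x
        ext1 <;> apply Subtype.ext <;> simp }
  have hinj : Function.Injective Ψ := by
    intro x y hxy
    have h1 : (x : P2) * g = y * g := congrArg (fun t => (t.1 : P2)) hxy
    exact Subtype.ext (mul_right_cancel₀ hg.ne_zero h1)
  have hker : LinearMap.range Ψ = LinearMap.ker Φ := by
    ext x
    rw [LinearMap.mem_range, LinearMap.mem_ker, hΦ]
    constructor
    · rintro ⟨h, rfl⟩
      simp only [Ψ, LinearMap.coe_mk, AddHom.coe_mk]
      ring
    · intro hx
      have hrel : IsRelPrime g f := fun d h1 h2 => hco d h2 h1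
      have hd : g ∣ (x.1 : P2) * f := ⟨-(x.2 : P2), by linear_combination hx⟩
      obtain ⟨h, hh⟩ := hrel.dvd_of_dvd_mul_right hd
      have hx2 : (x.2 : P2) = -(h * f) := by
        apply mul_right_cancel₀ hg.ne_zero
        rw [hh] at hx
        linear_combination hx
      have hmem : h ∈ VV n c := by
        rw [mem_VV]
        intro w hw
        by_cases hw' : 0 < w.1 ∨ 0 < w.2
        · obtain ⟨β, hβ, e⟩ := hA_att hg hw'
          have h1 := (mem_VV.1 x.1.2) w hw
          rw [hh, mul_comm] at h1
          have h2 := h1.of_mul hβ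
          refine h2.mono ?_
          rw [e]; simp
        · exact wle_neg hc hw' h
      refine ⟨⟨h, hmem⟩, ?_⟩
      ext1
      · apply Subtype.ext
        simp only [Ψ, LinearMap.coe_mk, AddHom.coe_mk]
        rw [hh, mul_comm]
      · apply Subtype.ext
        simp only [Ψ, LinearMap.coe_mk, AddHom.coe_mk]
        rw [hx2]
  have e1 := LinearMap.finrank_range_add_finrank_ker Φ
  rw [hrange, ← hker, LinearMap.finrank_range_of_inj hinj, Module.finrank_prod] at e1
  exact e1

/-- the codimension of the filtered ideal is the mixed area -/
lemma koszul_nu {f g : P2} (hf : QuasiConvenient f) (hg : QuasiConvenient g)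
    (hco : CoprimeDiv f g) (n : ℕ)
    (n1 : ∀ β ∈ S0 f, ∀ β' ∈ S0 f, |β.1 - β'.1| + |β.2 - β'.2| ≤ (n : ℤ))
    (n2 : ∀ β ∈ S0 g, ∀ β' ∈ S0 g, |β.1 - β'.1| + |β.2 - β'.2| ≤ (n : ℤ))
    (n3 : ∀ β ∈ S0 (f * g), ∀ β' ∈ S0 (f * g), |β.1 - β'.1| + |β.2 - β'.2| ≤ (n : ℤ))
    {c : ℤ × ℤ → ℤ} (hc : IsSup c) :
    (Module.finrank ℂ (VV n (fun w => c w + hA f w + hA g w)) : ℝ) =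
      Module.finrank ℂ (II n f g c) + nuInf f g := by
  have h1 := koszul_dim n hf hg hco hc
  have h2 := mixed_formula n (hA_sup f) (hA_sup g) hc
  have e : hA (f * g) = fun w => hA f w + hA g w := funext (hA_mul hf hg)
  rw [nuInf, newton_eq f n n1, newton_eq g n n2, newton_eq (f * g) n n3, e,
    (VV_fin ((hc.add (hA_sup f)).add (hA_sup g)) n).2]
  have h1' : (Module.finrank ℂ (II n f g c) : ℝ) + (latS n c).ncard =
      (latS n (fun w => c w + hA g w)).ncard + (latS n (fun w => c w + hA f w)).ncard := by
    exact_mod_cast h1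
  linarith

lemma nullst {φ ψ : P2} (h : ¬ ∃ x y : ℂ, x ≠ 0 ∧ y ≠ 0 ∧ eval ![x, y] φ = 0 ∧ eval ![x, y] ψ = 0) :
    ∃ (N : ℕ) (P Q : P2), monomial (Finsupp.single 0 N + Finsupp.single 1 N) (1 : ℂ) =
      P * φ + Q * ψ := by
  have h1 : (X 0 * X 1 : P2) ∈ vanishingIdeal ℂ (zeroLocus ℂ (Ideal.span {φ, ψ})) := by
    rw [mem_vanishingIdeal_iff]
    intro x hx
    rw [zeroLocus_span] at hx
    have hx1 := hx φ (by simp)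
    have hx2 := hx ψ (by simp)
    have ex : x = ![x 0, x 1] := by ext i; fin_cases i <;> rfl
    rw [ex] at hx1 hx2
    rw [aeval_eq_eval] at *
    by_contra hc
    simp at hc
    exact h ⟨x 0, x 1, hc.1, hc.2, hx1, hx2⟩
  rw [vanishingIdeal_zeroLocus_eq_radical] at h1
  obtain ⟨N, hN⟩ := h1
  obtain ⟨P, Q, e⟩ := Ideal.mem_span_pair.1 hN
  refine ⟨N, P, Q, ?_⟩
  rw [e, mul_pow, X_pow_eq_monomial, X_pow_eq_monomial, monomial_mul, one_mul]

/-- bounds for the Koszul representation -/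
def UB (n : ℕ) (H b : ℤ × ℤ → ℤ) (Pi k : ℤ) (L : Finset (ℤ × ℤ)) (u : P2) : Prop :=
  ∀ w ∈ rays n, ∀ m, coeff m u ≠ 0 →
    Pi * (dotZ w (ez m) - b w) ≤ k * H w ∧ (w ∈ L → Pi * (dotZ w (ez m) - b w) < k * H w)

lemma dvd_of_supp {M : Fin 2 →₀ ℕ} {k : P2} (h : ∀ m, coeff m k ≠ 0 → M ≤ m) :
    ∃ q, k = q * monomial M (1 : ℂ) := by
  have : monomial M (1 : ℂ) ∣ k := by
    rw [k.as_sum]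
    refine Finset.dvd_sum fun m hm => ?_
    refine ⟨monomial (m - M) (coeff m k), ?_⟩
    rw [monomial_mul, add_tsub_cancel_of_le (h m (mem_support_iff.1 hm)), one_mul]
  obtain ⟨q, hq⟩ := this
  exact ⟨q, by rw [hq, mul_comm]⟩

lemma coeff_mul_mon {M m : Fin 2 →₀ ℕ} {u : P2} (h : coeff m (u * monomial M (1 : ℂ)) ≠ 0) :
    ∃ μ, coeff μ u ≠ 0 ∧ m = μ + M := by
  obtain ⟨i, j, hi, hj, e⟩ := exists_of_coeff_mul h
  rw [coeff_monomial] at hj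
  split_ifs at hj with h1
  · exact ⟨i, hi, by rw [e, h1]⟩
  · simp at hj

lemma dotZ_neg (w x) : dotZ (-w) x = - dotZ w x := by simp [dotZ]; ring

/-- the key estimate on the syzygy quotient -/
lemma key_bound {g : P2} (hg : QuasiConvenient g) (n : ℕ)
    (n2 : ∀ β ∈ S0 g, ∀ β' ∈ S0 g, |β.1 - β'.1| + |β.2 - β'.2| ≤ (n : ℤ))
    {Pi k e : ℤ} (hPi : 0 < Pi) (hk : 0 < k) {L : Finset (ℤ × ℤ)}
    {u : P2} (hu : UB n (HH g) (hA g) Pi k L u) {w0 : ℤ × ℤ}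
    (hw0 : 0 < w0.1 ∨ 0 < w0.2) (he : Pi * e = k * HH g w0) {M : Fin 2 →₀ ℕ} {q : P2}
    (hq : q * tp w0 (hA g w0) g = tp w0 (e + hA g w0) u * monomial M 1)
    {m} (hm : coeff m q ≠ 0) {w' : ℤ × ℤ} (hw' : w' ∈ rays n) :
    Pi * dotZ w' (ez m - ez M) ≤ k * HH g w' ∧
      (w' ∈ L → Pi * dotZ w' (ez m - ez M) < k * HH g w') := by
  obtain ⟨β, hβ, hmax, hcase⟩ := two_max (S0 g) ⟨_, zero_mem_S0 g⟩
    (fun x => ((dotZ w0 x : ℤ) : ℝ)) (fun x => ((dotZ w' x : ℤ) : ℝ))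
  have hmax' : ∀ γ ∈ S0 g, dotZ w0 γ ≤ dotZ w0 β := fun γ hγ => by exact_mod_cast hmax γ hγ
  have sub : ∀ w, dotZ w (ez m - ez M) = dotZ w (ez m) - dotZ w (ez M) := by
    intro w; simp [dotZ]; ring
  have hb0 : hA g w0 = dotZ w0 β := by
    apply le_antisymm
    · obtain ⟨γ, hγ, e⟩ := exists_hT (zero_mem_S0 g) w0
      rw [hA, e]; exact hmax' γ hγ
    · exact le_hT _ _ hβ
  obtain ⟨β₀, hβ₀, rfl⟩ := hA_face hg hw0 hβ hb0.le
  have hψ : coeff β₀ (tp w0 (hA g w0) g) ≠ 0 := by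
    rw [coeff_tp, if_pos hb0.symm]; exact hβ₀
  -- consequence of multiplicativity in every direction
  have dir : ∀ s, ∃ μ, coeff μ u ≠ 0 ∧ dotZ w0 (ez μ) = e + hA g w0 ∧
      dotZ s (ez m - ez M) + dotZ s (ez β₀) ≤ dotZ s (ez μ) := by
    intro s
    obtain ⟨m', h1, h2⟩ := mult hm hψ s
    rw [hq] at h1
    obtain ⟨μ, hμ, rfl⟩ := coeff_mul_mon h1
    rw [coeff_tp] at hμ
    split_ifs at hμ with hd
    · refine ⟨μ, hμ, hd, ?_⟩
      rw [ez_add, dotZ_add] at h2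
      rw [sub]; omega
    · simp at hμ
  rcases hcase with hc | ⟨β', hβ', p1, p2, hc⟩
  · have hb' : hA g w' = dotZ w' (ez β₀) := by
      apply le_antisymm
      · obtain ⟨γ, hγ, e⟩ := exists_hT (zero_mem_S0 g) w'
        rw [hA, e]; exact_mod_cast hc γ hγ
      · exact le_hT _ _ hβ
    obtain ⟨μ, hμ, -, h2⟩ := dir w'
    have h3 := hu w' hw' μ hμ
    have h4 : Pi * dotZ w' (ez m - ez M) ≤ Pi * (dotZ w' (ez μ) - hA g w') :=
      mul_le_mul_of_nonneg_left (by omega) hPi.le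
    exact ⟨h4.trans h3.1, fun hL => h4.trans_lt (h3.2 hL)⟩
  · suffices H : Pi * dotZ w' (ez m - ez M) < k * HH g w' from ⟨H.le, fun _ => H⟩
    obtain ⟨x, hx⟩ : ∃ x, x = dotZ w' β' - dotZ w' (ez β₀) := ⟨_, rfl⟩
    obtain ⟨z, hz⟩ : ∃ z, z = dotZ w0 (ez β₀) - dotZ w0 β' := ⟨_, rfl⟩
    have xpos : 0 < x := by rw [hx]; exact_mod_cast p1
    have zpos : 0 < z := by rw [hz]; exact_mod_cast p2
    obtain ⟨s, hs⟩ : ∃ s : ℤ × ℤ, s = (x * w0.1 + z * w'.1, x * w0.2 + z * w'.2) := ⟨_, rfl⟩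
    have hsd : ∀ y, dotZ s y = x * dotZ w0 y + z * dotZ w' y := by
      intro y; rw [hs]; simp only [dotZ]; ring
    have smax : ∀ γ ∈ S0 g, dotZ s γ ≤ dotZ s (ez β₀) := by
      intro γ hγ
      rw [hsd, hsd, hx, hz]
      exact_mod_cast hc γ hγ
    have hbs : hA g s = dotZ s (ez β₀) := by
      apply le_antisymm
      · obtain ⟨γ, hγ, e⟩ := exists_hT (zero_mem_S0 g) s
        rw [hA, e]; exact smax γ hγ
      · exact le_hT _ _ hβ
    have sδ : dotZ s (β' - ez β₀) = 0 := by
      have : dotZ s (β' - ez β₀) = dotZ s β' - dotZ s (ez β₀) := by simp [dotZ]; ring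
      rw [this, hsd, hsd, hx, hz]; ring
    have strict := HH_strict g hβ hβ' xpos zpos hw0 (w' := w') (s := s) (by simp [hs]) (by simp [hs]) sδ
      (by have : dotZ w0 (β' - ez β₀) = dotZ w0 β' - dotZ w0 (ez β₀) := by simp [dotZ]; ring
          omega)
      (by have : dotZ w' (β' - ez β₀) = dotZ w' β' - dotZ w' (ez β₀) := by simp [dotZ]; ring
          omega)
    -- bound in direction s
    obtain ⟨μ, hμ, -, h2⟩ := dir s
    have bs : Pi * dotZ s (ez m - ez M) ≤ k * HH g s := by
      by_cases hsp : 0 < s.1 ∨ 0 < s.2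
      · obtain ⟨y, hy, r, hr, hsr⟩ := ray_int n s (β' - ez β₀)
          (by rw [sub_ne_zero]; rintro rfl; simp at hx; omega) (n2 _ hβ' _ hβ) sδ hsp
        have h3 := (hu r hr μ hμ).1
        have e1 : HH g s = y * HH g r := by rw [hsr, (HH_sup g).smul hy.le]
        have e2 : hA g s = y * hA g r := by rw [hsr, (hA_sup g).smul hy.le]
        have e3 : dotZ s (ez μ) = y * dotZ r (ez μ) := by rw [hsr]; simp only [dotZ]; ring
        have h4 : Pi * dotZ s (ez m - ez M) ≤ Pi * (dotZ s (ez μ) - hA g s) :=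
          mul_le_mul_of_nonneg_left (by omega) hPi.le
        have h5 := mul_le_mul_of_nonneg_left h3 hy.le
        rw [e1]
        rw [e2, e3] at h4
        nlinarith
      · have h3 := wle_neg (hA_sup g) hsp u μ hμ
        have h4 : dotZ s (ez m - ez M) ≤ 0 := by omega
        push Not at hsp
        rw [(HH_sup g).neg s hsp.1 hsp.2]
        nlinarith
    obtain ⟨μ', hμ', hd', h2'⟩ := dir (-w0)
    rw [dotZ_neg, dotZ_neg, dotZ_neg] at h2'
    have low : e ≤ dotZ w0 (ez m - ez M) := by omega
    have low' : x * (k * HH g w0) ≤ x * (Pi * dotZ w0 (ez m - ez M)) := by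
      rw [← he]
      exact mul_le_mul_of_nonneg_left (mul_le_mul_of_nonneg_left low hPi.le) xpos.le
    rw [hsd] at bs
    have st := mul_lt_mul_of_pos_left strict hk
    have fin : z * (Pi * dotZ w' (ez m - ez M)) < z * (k * HH g w') := by nlinarith
    exact lt_of_mul_lt_mul_left fin zpos.le

lemma lower_step {f g : P2} (hg : QuasiConvenient g) (n : ℕ)
    (n2 : ∀ β ∈ S0 g, ∀ β' ∈ S0 g, |β.1 - β'.1| + |β.2 - β'.2| ≤ (n : ℤ))
    {Pi k t : ℤ} (hPi : 0 < Pi) (ht : 0 ≤ t) (hk : Pi * t < k) {L : Finset (ℤ × ℤ)}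
    {u v : P2} (hu : UB n (HH g) (hA g) Pi k L u) (hv : UB n (HH g) (hA f) Pi k L v) {w0 : ℤ × ℤ}
    (hw0 : 0 < w0.1 ∨ 0 < w0.2) (hr : w0 ∈ rays n)
    (hF : wle w0 (t * HH g w0 + hA f w0 + hA g w0) (u * f + v * g))
    (hnd : ¬ ∃ x y : ℂ, x ≠ 0 ∧ y ≠ 0 ∧ eval ![x, y] (tp w0 (hA f w0) f) = 0 ∧
      eval ![x, y] (tp w0 (hA g w0) g) = 0) :
    ∃ u' v', u' * f + v' * g = u * f + v * g ∧ UB n (HH g) (hA g) Pi k (insert w0 L) u' ∧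
      UB n (HH g) (hA f) Pi k (insert w0 L) v' := by
  have hk0 : 0 < k := lt_of_le_of_lt (mul_nonneg hPi.le ht) hk
  by_cases hdvd : Pi ∣ k * HH g w0
  swap
  · refine ⟨u, v, rfl, ?_, ?_⟩
    · intro w hw m hm
      refine ⟨(hu w hw m hm).1, fun hL => ?_⟩
      rcases Finset.mem_insert.1 hL with rfl | hL
      · refine lt_of_le_of_ne (hu w hw m hm).1 fun h => hdvd ?_
        rw [← h]; exact dvd_mul_right _ _
      · exact (hu w hw m hm).2 hL
    · intro w hw m hm
      refine ⟨(hv w hw m hm).1, fun hL => ?_⟩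
      rcases Finset.mem_insert.1 hL with rfl | hL
      · refine lt_of_le_of_ne (hv w hw m hm).1 fun h => hdvd ?_
        rw [← h]; exact dvd_mul_right _ _
      · exact (hv w hw m hm).2 hL
  obtain ⟨e, he⟩ := hdvd
  have hHpos := HH_pos g hw0
  have ht' : t * HH g w0 < e := by
    have h1 : Pi * t * HH g w0 < k * HH g w0 := mul_lt_mul_of_pos_right hk hHpos
    rw [he, mul_assoc] at h1
    exact lt_of_mul_lt_mul_left h1 hPi.le
  have wu : wle w0 (e + hA g w0) u := by
    intro m hm
    have := (hu w0 hr m hm).1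
    rw [he] at this
    have := le_of_mul_le_mul_left this hPi
    omega
  have wv : wle w0 (e + hA f w0) v := by
    intro m hm
    have := (hv w0 hr m hm).1
    rw [he] at this
    have := le_of_mul_le_mul_left this hPi
    omega
  set φ := tp w0 (hA f w0) f with hφ
  set ψ := tp w0 (hA g w0) g with hψ
  set uw := tp w0 (e + hA g w0) u with huw
  set vw := tp w0 (e + hA f w0) v with hvw
  have rel : uw * φ + vw * ψ = 0 := by
    rw [huw, hφ, hvw, hψ, ← tp_mul wu (wle_hA f w0), ← tp_mul wv (wle_hA g w0),
      show e + hA f w0 + hA g w0 = e + hA g w0 + hA f w0 by ring, ← map_add]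
    exact tp_eq_zero hF (by omega)
  obtain ⟨N, P, Q, hPQ⟩ := nullst hnd
  set M : Fin 2 →₀ ℕ := Finsupp.single 0 N + Finsupp.single 1 N
  set q := uw * Q - vw * P
  have q1 : q * ψ = uw * monomial M 1 := by
    rw [hPQ]; simp only [q]; linear_combination (-P) * rel
  have q2 : q * φ = -(vw * monomial M 1) := by
    rw [hPQ]; simp only [q]; linear_combination Q * rel
  have kb : ∀ m, coeff m q ≠ 0 → ∀ w' ∈ rays n, Pi * dotZ w' (ez m - ez M) ≤ k * HH g w' ∧
      (w' ∈ L → Pi * dotZ w' (ez m - ez M) < k * HH g w') :=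
    fun m hm w' hw' => key_bound hg n n2 hPi hk0 hu hw0 he.symm q1 hm hw'
  obtain ⟨h, hh⟩ : ∃ h, q = h * monomial M (1 : ℂ) := by
    apply dvd_of_supp
    intro m hm
    have h1 := (kb m hm (-1, 0) (by simp [rays])).1
    have h2 := (kb m hm (0, -1) (by simp [rays])).1
    rw [(HH_sup g).neg _ (by simp) (by simp)] at h1 h2
    simp [dotZ] at h1 h2
    have h1' : 0 ≤ (ez m).1 - (ez M).1 := by nlinarith
    have h2' : 0 ≤ (ez m).2 - (ez M).2 := by nlinarith
    intro i
    fin_cases i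
    · simp only [ez] at h1'; simp; omega
    · simp only [ez] at h2'; simp; omega
  have hM : monomial M (1 : ℂ) ≠ 0 := by simp
  have r1 : h * ψ = uw := by
    apply mul_right_cancel₀ hM; rw [← q1, hh]; ring
  have r2 : h * φ = -vw := by
    apply mul_right_cancel₀ hM
    rw [hh] at q2; linear_combination q2
  have hb : ∀ m, coeff m h ≠ 0 → ∀ w' ∈ rays n, Pi * dotZ w' (ez m) ≤ k * HH g w' ∧
      (w' ∈ L → Pi * dotZ w' (ez m) < k * HH g w') := by
    intro m hm w' hw'
    have := kb (m + M) (by rw [hh, coeff_mul_monomial, mul_one]; exact hm) w' hw'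
    rwa [ez_add, add_sub_cancel_right] at this
  have wh : wle w0 e h := by
    intro m hm
    have := (hb m hm w0 hr).1
    rw [he] at this
    exact le_of_mul_le_mul_left this hPi
  have t1 : tp w0 (e + hA g w0) (u - h * g) = 0 := by
    rw [map_sub, tp_mul wh (wle_hA g w0), ← hψ, ← huw]
    have : uw = tp w0 e h * ψ := by
      have h1 := tp_mul wh ((wle_hA g w0).of_tp w0 (hA g w0))
      rw [tp_tp, ← hψ, r1, huw, tp_tp, ← huw] at h1
      exact h1
    rw [← this, sub_self]
  have t2 : tp w0 (e + hA f w0) (v + h * f) = 0 := by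
    rw [map_add, tp_mul wh (wle_hA f w0), ← hφ, ← hvw]
    have : -vw = tp w0 e h * φ := by
      have h1 := tp_mul wh ((wle_hA f w0).of_tp w0 (hA f w0))
      rw [tp_tp, ← hφ, r2, hvw, map_neg, tp_tp, ← hvw] at h1
      exact h1
    rw [← this, add_neg_cancel]
  have wu' : wle w0 (e + hA g w0) (u - h * g) := wu.sub (wh.mul (wle_hA g w0))
  have wv' : wle w0 (e + hA f w0) (v + h * f) := wv.add (wh.mul (wle_hA f w0))
  have gen : ∀ (b : P2) (u₀ u' c : P2), UB n (HH g) (hA b) Pi k L u₀ → u' = u₀ + h * c →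
      (∀ m, coeff m c ≠ 0 → ∀ w, dotZ w (ez m) ≤ hA b w) →
      wle w0 (e + hA b w0 - 1) u' → UB n (HH g) (hA b) Pi k (insert w0 L) u' := by
    intro b u₀ u' c h0 hu' hc hw w hwr m hm
    have main : Pi * (dotZ w (ez m) - hA b w) ≤ k * HH g w ∧
        (w ∈ L → Pi * (dotZ w (ez m) - hA b w) < k * HH g w) := by
      by_cases hz : coeff m u₀ = 0
      · rw [hu', coeff_add, hz, zero_add] at hm
        obtain ⟨i, j, hi, hj, rfl⟩ := exists_of_coeff_mul hm
        have h1 := hb i hi w hwr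
        have h2 := hc j hj w
        have h3 : Pi * (dotZ w (ez (i + j)) - hA b w) ≤ Pi * dotZ w (ez i) :=
          mul_le_mul_of_nonneg_left (by rw [ez_add, dotZ_add]; omega) hPi.le
        exact ⟨h3.trans h1.1, fun hL => h3.trans_lt (h1.2 hL)⟩
      · exact h0 w hwr m hz
    refine ⟨main.1, fun hL => ?_⟩
    rcases Finset.mem_insert.1 hL with rfl | hL
    · have := hw m hm
      rw [he]
      exact mul_lt_mul_of_pos_left (by omega) hPi
    · exact main.2 hL
  refine ⟨u - h * g, v + h * f, by ring, ?_, ?_⟩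
  · exact gen g u _ (-g) hu (by ring)
      (fun m hm w => wle_hA g w m (by simpa using hm)) (wu'.lt_of_tp t1)
  · exact gen f v _ f hv rfl (fun m hm w => wle_hA f w m hm) (wv'.lt_of_tp t2)

def Rp (n : ℕ) : Finset (ℤ × ℤ) := (rays n).filter (fun w => 0 < w.1 ∨ 0 < w.2)

lemma UB_neg {n : ℕ} {H b : ℤ × ℤ → ℤ} (hH : IsSup H) (hb : IsSup b) {Pi k : ℤ} (hPi : 0 ≤ Pi)
    {w : ℤ × ℤ} (hw : ¬ (0 < w.1 ∨ 0 < w.2)) (m) :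
    Pi * (dotZ w (ez m) - b w) ≤ k * H w := by
  have h1 : dotZ w (ez m) ≤ b w := wle_neg hb hw (monomial m 1) m (by simp)
  push Not at hw
  rw [hH.neg w hw.1 hw.2]
  nlinarith

lemma UB_exists (n : ℕ) {H b : ℤ × ℤ → ℤ} (hH : IsSup H) (hb : IsSup b)
    (hpos : ∀ w : ℤ × ℤ, (0 < w.1 ∨ 0 < w.2) → 0 < H w) {Pi : ℤ} (hPi : 0 ≤ Pi) (u : P2) :
    ∃ k0 : ℕ, ∀ k : ℤ, k0 ≤ k → UB n H b Pi k ∅ u := by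
  refine ⟨(∑ w ∈ rays n, ∑ m ∈ u.support, |Pi * (dotZ w (ez m) - b w)|).toNat, ?_⟩
  intro k hk w hw m hm
  refine ⟨?_, by simp⟩
  by_cases hw' : 0 < w.1 ∨ 0 < w.2
  · have h1 : |Pi * (dotZ w (ez m) - b w)| ≤ ∑ w ∈ rays n, ∑ m ∈ u.support, |Pi * (dotZ w (ez m) - b w)| := by
      refine le_trans ?_ (Finset.single_le_sum (f := fun w => ∑ m ∈ u.support, |Pi * (dotZ w (ez m) - b w)|)
        (fun i _ => Finset.sum_nonneg fun j _ => abs_nonneg _) hw)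
      exact Finset.single_le_sum (f := fun m => |Pi * (dotZ w (ez m) - b w)|)
        (fun i _ => abs_nonneg _) (mem_support_iff.2 hm)
    have h2 := le_abs_self (Pi * (dotZ w (ez m) - b w))
    have h3 := hpos w hw'
    have h4 : 0 ≤ k := by omega
    have h5 : |Pi * (dotZ w (ez m) - b w)| ≤ k := by omega
    nlinarith
  · exact UB_neg (n := n) hH hb hPi hw' m

lemma UB_lower {n : ℕ} {g : P2} {b : ℤ × ℤ → ℤ} (hb : IsSup b) {k : ℤ} {u : P2}
    (hu : UB n (HH g) b (∏ w ∈ Rp n, HH g w) (k + 1) (Rp n) u) :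
    UB n (HH g) b (∏ w ∈ Rp n, HH g w) k ∅ u := by
  have hpos : ∀ w ∈ Rp n, 0 < HH g w := fun w hw => HH_pos g (Finset.mem_filter.1 hw).2
  have hPi : 0 < ∏ w ∈ Rp n, HH g w := Finset.prod_pos hpos
  intro w hw m hm
  refine ⟨?_, by simp⟩
  by_cases hw' : 0 < w.1 ∨ 0 < w.2
  · have hmem : w ∈ Rp n := Finset.mem_filter.2 ⟨hw, hw'⟩
    have h1 := (hu w hw m hm).2 hmem
    obtain ⟨c, hc⟩ := Finset.dvd_prod_of_mem (HH g) hmem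
    have h2 := hpos w hmem
    rw [hc] at h1 ⊢
    have h3 : HH g w * (c * (dotZ w (ez m) - b w)) < HH g w * (k + 1) := by linarith
    have h4 := lt_of_mul_lt_mul_left h3 h2.le
    have h5 : c * (dotZ w (ez m) - b w) ≤ k := by omega
    have h6 := mul_le_mul_of_nonneg_left h5 h2.le
    linarith
  · exact UB_neg (n := n) (HH_sup g) hb hPi.le hw' m

lemma nondeg_inter {f g : P2} (hg : QuasiConvenient g) (n : ℕ)
    (n2 : ∀ β ∈ S0 g, ∀ β' ∈ S0 g, |β.1 - β'.1| + |β.2 - β'.2| ≤ (n : ℤ))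
    (hnd : ∀ w ∈ Rp n, ¬ ∃ x y : ℂ, x ≠ 0 ∧ y ≠ 0 ∧ eval ![x, y] (tp w (hA f w) f) = 0 ∧
      eval ![x, y] (tp w (hA g w) g) = 0)
    (t : ℕ) {F : P2} (hF : F ∈ VV n (fun w => (t : ℤ) * HH g w + hA f w + hA g w))
    (hJ : F ∈ Ideal.span {f, g}) : F ∈ II n f g (fun w => (t : ℤ) * HH g w) := by
  obtain ⟨u, v, huv⟩ := Ideal.mem_span_pair.1 hJ
  have hpos : ∀ w ∈ Rp n, 0 < HH g w := fun w hw => HH_pos g (Finset.mem_filter.1 hw).2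
  have hPi : 0 < ∏ w ∈ Rp n, HH g w := Finset.prod_pos hpos
  set Pi := ∏ w ∈ Rp n, HH g w with hPid
  -- one level
  have level : ∀ k : ℤ, Pi * t < k → ∀ L : Finset (ℤ × ℤ), L ⊆ Rp n → ∀ u v : P2, u * f + v * g = F →
      UB n (HH g) (hA g) Pi k ∅ u → UB n (HH g) (hA f) Pi k ∅ v →
      ∃ u' v', u' * f + v' * g = F ∧ UB n (HH g) (hA g) Pi k L u' ∧ UB n (HH g) (hA f) Pi k L v' := by
    intro k hk L
    induction L using Finset.induction_on with
    | empty => exact fun _ u v h h1 h2 => ⟨u, v, h, h1, h2⟩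
    | insert w L _ ih =>
      intro hL u v h h1 h2
      obtain ⟨u', v', e, k1, k2⟩ := ih ((Finset.subset_insert _ _).trans hL) u v h h1 h2
      have hw := Finset.mem_filter.1 (hL (Finset.mem_insert_self w L))
      obtain ⟨u'', v'', e', l1, l2⟩ := lower_step hg n n2 hPi (by positivity) hk k1 k2 hw.2 hw.1
        (by rw [e]; exact mem_VV.1 hF w hw.1) (hnd w (hL (Finset.mem_insert_self w L)))
      exact ⟨u'', v'', e'.trans e, l1, l2⟩
  have descend : ∀ j : ℕ, ∀ u v : P2, u * f + v * g = F →
      UB n (HH g) (hA g) Pi (Pi * t + j) ∅ u → UB n (HH g) (hA f) Pi (Pi * t + j) ∅ v →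
      ∃ u' v', u' * f + v' * g = F ∧ UB n (HH g) (hA g) Pi (Pi * t) ∅ u' ∧
        UB n (HH g) (hA f) Pi (Pi * t) ∅ v' := by
    intro j
    induction j with
    | zero => intro u v h h1 h2; exact ⟨u, v, h, by simpa using h1, by simpa using h2⟩
    | succ j ih =>
      intro u v h h1 h2
      obtain ⟨u', v', e, k1, k2⟩ := level _ (by push_cast; omega) (Rp n) subset_rfl u v h h1 h2
      push_cast at k1 k2
      rw [← add_assoc] at k1 k2
      exact ih u' v' e (UB_lower (hA_sup g) k1) (UB_lower (hA_sup f) k2)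
  obtain ⟨k1, hk1⟩ := UB_exists n (HH_sup g) (hA_sup g) (fun w hw => HH_pos g hw) hPi.le u
  obtain ⟨k2, hk2⟩ := UB_exists n (HH_sup g) (hA_sup f) (fun w hw => HH_pos g hw) hPi.le v
  have ht : 0 ≤ Pi * t := by positivity
  obtain ⟨u', v', e, l1, l2⟩ := descend (k1 + k2) u v huv (hk1 _ (by push_cast; omega))
    (hk2 _ (by push_cast; omega))
  have conv : ∀ (b : ℤ × ℤ → ℤ) (u : P2), UB n (HH g) b Pi (Pi * t) ∅ u →
      u ∈ VV n (fun w => (t : ℤ) * HH g w + b w) := by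
    intro b u hu
    rw [mem_VV]
    intro w hw m hm
    have := (hu w hw m hm).1
    rw [mul_assoc] at this
    have := le_of_mul_le_mul_left this hPi
    omega
  exact mem_II.2 ⟨u', conv _ _ l1, v', conv _ _ l2, e⟩

lemma rank_piece {E Q : Type*} [AddCommGroup E] [Module ℂ E] [AddCommGroup Q] [Module ℂ Q]
    (π : E →ₗ[ℂ] Q) (V : Submodule ℂ E) [Module.Finite ℂ V] :
    Module.finrank ℂ (V.map π) + Module.finrank ℂ (V ⊓ LinearMap.ker π : Submodule ℂ E) =
      Module.finrank ℂ V := by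
  have h := LinearMap.finrank_range_add_finrank_ker (π.domRestrict V)
  rw [LinearMap.range_domRestrict, LinearMap.ker_domRestrict] at h
  rw [← h, ← Submodule.finrank_map_subtype_eq V (Submodule.comap V.subtype (LinearMap.ker π)),
    Submodule.map_comap_subtype]

lemma filt_abstract {E Q : Type*} [AddCommGroup E] [Module ℂ E] [AddCommGroup Q] [Module ℂ Q]
    (π : E →ₗ[ℂ] Q) (hπ : Function.Surjective π) (V I : ℕ → Submodule ℂ E) (hmono : Monotone V)
    (hex : ∀ x, ∃ t, x ∈ V t) (hfin : ∀ t, Module.Finite ℂ (V t))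
    (hI : ∀ t, I t ≤ V t ⊓ LinearMap.ker π) (ν : ℝ)
    (hν : ∀ t, (Module.finrank ℂ (V t) : ℝ) = Module.finrank ℂ (I t) + ν) :
    Module.Finite ℂ Q ∧ ∃ t0, ∀ t ≥ t0, (V t).map π = ⊤ ∧
      Module.finrank ℂ Q + Module.finrank ℂ (V t ⊓ LinearMap.ker π : Submodule ℂ E) =
      Module.finrank ℂ (V t) := by
  have hfI : ∀ t, Module.Finite ℂ (V t ⊓ LinearMap.ker π : Submodule ℂ E) := fun t =>
    Submodule.finiteDimensional_of_le inf_le_left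
  have hbd : ∀ t, (Module.finrank ℂ ((V t).map π) : ℝ) ≤ ν := by
    intro t
    have h1 := rank_piece π (V t)
    have h2 := Submodule.finrank_mono (hI t)
    have h3 := hν t
    rw [← h1] at h3
    have h2' : (Module.finrank ℂ (I t) : ℝ) ≤ Module.finrank ℂ (V t ⊓ LinearMap.ker π : Submodule ℂ E) := by
      exact_mod_cast h2
    push_cast at h3
    linarith
  -- a maximal image
  have hB : ∃ t0, ∀ t, Module.finrank ℂ ((V t).map π) ≤ Module.finrank ℂ ((V t0).map π) := by
    by_contra hc
    push Not at hc
    have : ∀ k : ℕ, ∃ t, k ≤ Module.finrank ℂ ((V t).map π) := by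
      intro k
      induction k with
      | zero => exact ⟨0, Nat.zero_le _⟩
      | succ k ih =>
        obtain ⟨t, ht⟩ := ih
        obtain ⟨t', ht'⟩ := hc t
        exact ⟨t', by omega⟩
    obtain ⟨k, hk⟩ := exists_nat_gt ν
    obtain ⟨t, ht⟩ := this k
    have := hbd t
    have : (k : ℝ) ≤ Module.finrank ℂ ((V t).map π) := by exact_mod_cast ht
    linarith
  obtain ⟨t0, ht0⟩ := hB
  have hfm : ∀ t, Module.Finite ℂ ((V t).map π) := fun t => Module.Finite.map _ _
  have heq : ∀ t ≥ t0, (V t0).map π = (V t).map π := fun t ht =>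
    Submodule.eq_of_le_of_finrank_le (Submodule.map_mono (hmono ht)) (ht0 t)
  have htop : (V t0).map π = ⊤ := by
    rw [eq_top_iff]
    intro y _
    obtain ⟨x, rfl⟩ := hπ y
    obtain ⟨t, ht⟩ := hex x
    have h1 : π x ∈ (V (max t t0)).map π := ⟨x, hmono (le_max_left _ _) ht, rfl⟩
    rwa [← heq _ (le_max_right _ _)] at h1
  have hQ : Module.Finite ℂ Q := by
    have := hfm t0
    rw [htop] at this
    exact Module.Finite.of_surjective (Submodule.topEquiv (R := ℂ) (M := Q)).toLinearMap
      Submodule.topEquiv.surjective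
  refine ⟨hQ, t0, fun t ht => ?_⟩
  have e : (V t).map π = ⊤ := by rw [← heq t ht, htop]
  refine ⟨e, ?_⟩
  have := rank_piece π (V t)
  rwa [e, finrank_top] at this

lemma VV_exhaust (n : ℕ) {H c : ℤ × ℤ → ℤ} (hH : IsSup H) (hc : IsSup c)
    (hpos : ∀ w : ℤ × ℤ, (0 < w.1 ∨ 0 < w.2) → 0 < H w) (u : P2) :
    ∃ t : ℕ, u ∈ VV n (fun w => (t : ℤ) * H w + c w) := by
  obtain ⟨k0, hk⟩ := UB_exists n hH hc hpos (Pi := 1) (by simp) u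
  refine ⟨k0, mem_VV.2 fun w hw m hm => ?_⟩
  have := (hk k0 le_rfl w hw m hm).1
  linarith

section
variable {f g : P2}

def piJ (f g : P2) : P2 →ₗ[ℂ] (P2 ⧸ Ideal.span {f, g}) :=
  (Ideal.Quotient.mkₐ ℂ (Ideal.span {f, g})).toLinearMap

lemma ker_piJ (f g F : P2) : F ∈ LinearMap.ker (piJ f g) ↔ F ∈ Ideal.span {f, g} := by
  rw [LinearMap.mem_ker]
  exact Ideal.Quotient.eq_zero_iff_mem

/-- the filtration -/
def Vt (n : ℕ) (f g : P2) (t : ℕ) : Submodule ℂ P2 :=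
  VV n (fun w => (t : ℤ) * HH g w + hA f w + hA g w)

lemma Vt_filt (hf : QuasiConvenient f) (hg : QuasiConvenient g)
    (hco : CoprimeDiv f g) (n : ℕ)
    (n1 : ∀ β ∈ S0 f, ∀ β' ∈ S0 f, |β.1 - β'.1| + |β.2 - β'.2| ≤ (n : ℤ))
    (n2 : ∀ β ∈ S0 g, ∀ β' ∈ S0 g, |β.1 - β'.1| + |β.2 - β'.2| ≤ (n : ℤ))
    (n3 : ∀ β ∈ S0 (f * g), ∀ β' ∈ S0 (f * g), |β.1 - β'.1| + |β.2 - β'.2| ≤ (n : ℤ)) :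
    Module.Finite ℂ (P2 ⧸ Ideal.span {f, g}) ∧ ∃ t0, ∀ t ≥ t0, (Vt n f g t).map (piJ f g) = ⊤ ∧
      Module.finrank ℂ (P2 ⧸ Ideal.span {f, g}) +
        Module.finrank ℂ (Vt n f g t ⊓ LinearMap.ker (piJ f g) : Submodule ℂ P2) =
      Module.finrank ℂ (Vt n f g t) := by
  have hsup : ∀ t : ℕ, IsSup (fun w => (t : ℤ) * HH g w) := fun t => (HH_sup g).nsmul t
  apply filt_abstract (piJ f g) Ideal.Quotient.mk_surjective (Vt n f g)
    (fun t => II n f g (fun w => (t : ℤ) * HH g w)) ?_ ?_ ?_ ?_ (nuInf f g)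
  · exact fun t => koszul_nu hf hg hco n n1 n2 n3 (hsup t)
  · intro t s hts u hu
    refine mem_VV.2 fun w hw => (mem_VV.1 hu w hw).mono ?_
    have := (HH_sup g).nonneg w
    have : (t : ℤ) ≤ s := by exact_mod_cast hts
    nlinarith
  · intro u
    obtain ⟨t, ht⟩ := VV_exhaust n (HH_sup g) ((hA_sup f).add (hA_sup g)) (fun w hw => HH_pos g hw) u
    refine ⟨t, ?_⟩
    rw [Vt]
    simpa only [add_assoc] using ht
  · exact fun t => (VV_fin (((hsup t).add (hA_sup f)).add (hA_sup g)) n).1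
  · intro t
    refine le_inf (II_le n f g _) ?_
    intro F hF
    obtain ⟨u, _, v, _, e⟩ := mem_II.1 hF
    rw [ker_piJ]
    exact Ideal.mem_span_pair.2 ⟨u, v, e⟩

/-- finite lattice version of the main equivalence -/
lemma main_lattice (hf : QuasiConvenient f) (hg : QuasiConvenient g)
    (hco : CoprimeDiv f g) (n : ℕ)
    (n1 : ∀ β ∈ S0 f, ∀ β' ∈ S0 f, |β.1 - β'.1| + |β.2 - β'.2| ≤ (n : ℤ))
    (n2 : ∀ β ∈ S0 g, ∀ β' ∈ S0 g, |β.1 - β'.1| + |β.2 - β'.2| ≤ (n : ℤ))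
    (n3 : ∀ β ∈ S0 (f * g), ∀ β' ∈ S0 (f * g), |β.1 - β'.1| + |β.2 - β'.2| ≤ (n : ℤ)) :
    (Module.finrank ℂ (P2 ⧸ Ideal.span {f, g}) : ℝ) = nuInf f g ↔
    ∀ w ∈ Rp n, ¬ ∃ x y : ℂ, x ≠ 0 ∧ y ≠ 0 ∧ eval ![x, y] (tp w (hA f w) f) = 0 ∧
      eval ![x, y] (tp w (hA g w) g) = 0 := by
  have hsup : ∀ t : ℕ, IsSup (fun w => (t : ℤ) * HH g w) := fun t => (HH_sup g).nsmul t
  obtain ⟨hfin, t0, ht0⟩ := Vt_filt hf hg hco n n1 n2 n3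
  have hle : ∀ t : ℕ, II n f g (fun w => (t : ℤ) * HH g w) ≤ Vt n f g t ⊓ LinearMap.ker (piJ f g) := by
    intro t
    refine le_inf (II_le n f g _) ?_
    intro F hF
    obtain ⟨u, _, v, _, e⟩ := mem_II.1 hF
    rw [ker_piJ]
    exact Ideal.mem_span_pair.2 ⟨u, v, e⟩
  constructor
  · intro hD w hw ⟨x, y, hx, hy, hef, heg⟩
    obtain ⟨hwr, hwp⟩ := Finset.mem_filter.1 hw
    have hfV : Module.Finite ℂ (Vt n f g (t0 + 1)) :=
      (VV_fin (((hsup (t0 + 1)).add (hA_sup f)).add (hA_sup g)) n).1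
    have hfI : Module.Finite ℂ (Vt n f g (t0 + 1) ⊓ LinearMap.ker (piJ f g) : Submodule ℂ P2) :=
      Submodule.finiteDimensional_of_le inf_le_left
    have heq : II n f g (fun w => ((t0 + 1 : ℕ) : ℤ) * HH g w) =
        Vt n f g (t0 + 1) ⊓ LinearMap.ker (piJ f g) := by
      apply Submodule.eq_of_le_of_finrank_le (hle _)
      have h1 := (ht0 (t0 + 1) (by omega)).2
      have h2 := koszul_nu hf hg hco n n1 n2 n3 (hsup (t0 + 1))
      rw [← hD] at h2
      have h3 : (Module.finrank ℂ (P2 ⧸ Ideal.span {f, g}) : ℝ) +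
        Module.finrank ℂ (Vt n f g (t0 + 1) ⊓ LinearMap.ker (piJ f g) : Submodule ℂ P2) =
        Module.finrank ℂ (Vt n f g (t0 + 1)) := by exact_mod_cast h1
      rw [Vt] at h3 ⊢
      have h4 : (Module.finrank ℂ (VV n (fun w => ((t0 + 1 : ℕ) : ℤ) * HH g w + hA f w + hA g w) ⊓
          LinearMap.ker (piJ f g) : Submodule ℂ P2) : ℝ) ≤
          Module.finrank ℂ (II n f g (fun w => ((t0 + 1 : ℕ) : ℤ) * HH g w)) := by linarith
      exact_mod_cast h4
    -- a monomial of maximal weight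
    obtain ⟨m, m1, m2, m3, m4⟩ := (((hsup (t0 + 1)).add (hA_sup f)).add (hA_sup g)).att w
    set E : Fin 2 →₀ ℕ := Finsupp.single 0 m.1.toNat + Finsupp.single 1 m.2.toNat
    have hE : ez E = m := by simp [E, ez, m1, m2]
    set G : P2 := monomial E 1
    have hG : G ∈ Vt n f g (t0 + 1) := by
      refine mem_VV.2 fun w' _ k hk => ?_
      simp only [G, coeff_monomial] at hk
      split_ifs at hk with h
      · rw [← h, hE]; exact m4 w'
      · simp at hk
    have hGt : piJ f g G ∈ (Vt n f g t0).map (piJ f g) := by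
      rw [(ht0 t0 le_rfl).1]; trivial
    obtain ⟨G', hG', e⟩ := hGt
    have hdiff : G - G' ∈ II n f g (fun w => ((t0 + 1 : ℕ) : ℤ) * HH g w) := by
      rw [heq]
      refine ⟨Submodule.sub_mem _ hG ?_, ?_⟩
      · refine mem_VV.2 fun w hw => (mem_VV.1 hG' w hw).mono ?_
        have := (HH_sup g).nonneg w
        push_cast
        linarith
      · show G - G' ∈ LinearMap.ker (piJ f g)
        rw [LinearMap.mem_ker, map_sub, e, sub_self]
    obtain ⟨u, hu, v, hv, huv⟩ := mem_II.1 hdiff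
    set d : ℤ := ((t0 + 1 : ℕ) : ℤ) * HH g w with hd
    have hu' := mem_VV.1 hu w hwr
    have hv' := mem_VV.1 hv w hwr
    have k1 : tp w (d + hA f w + hA g w) G' = 0 := by
      refine tp_eq_zero (mem_VV.1 hG' w hwr) ?_
      have := HH_pos g hwp
      rw [hd]; push_cast; linarith
    have k2 : eval ![x, y] (tp w (d + hA f w + hA g w) (u * f + v * g)) = 0 := by
      rw [map_add, tp_mul hv' (wle_hA g w),
        show d + hA f w + hA g w = d + hA g w + hA f w by ring, tp_mul hu' (wle_hA f w)]
      simp [hef, heg]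
    have k3 : tp w (d + hA f w + hA g w) G = G := by
      ext k
      rw [coeff_tp]
      simp only [G, coeff_monomial]
      split_ifs with h1 h2 h2
      · rfl
      · rfl
      · exfalso; apply h1; rw [← h2, hE]; exact m3
      · rfl
    rw [huv, map_sub, k1, k3, sub_zero] at k2
    simp [G, E, eval_monomial, Finsupp.prod_add_index', pow_add, hx, hy] at k2
  · intro hnd
    have heq : II n f g (fun w => ((t0 : ℕ) : ℤ) * HH g w) =
        Vt n f g t0 ⊓ LinearMap.ker (piJ f g) := by
      apply le_antisymm (hle _)
      rintro F ⟨h1, h2⟩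
      exact nondeg_inter hg n n2 hnd t0 h1 ((ker_piJ f g F).1 h2)
    have h1 := (ht0 t0 le_rfl).2
    have h2 := koszul_nu hf hg hco n n1 n2 n3 (hsup t0)
    have h3 : (Module.finrank ℂ (P2 ⧸ Ideal.span {f, g}) : ℝ) +
        Module.finrank ℂ (Vt n f g t0 ⊓ LinearMap.ker (piJ f g) : Submodule ℂ P2) =
        Module.finrank ℂ (Vt n f g t0) := by exact_mod_cast h1
    rw [← heq, Vt] at h3
    linarith
end

lemma wt_scale (y : ℝ) (w : ℤ × ℤ) (m : Fin 2 →₀ ℕ) :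
    wt (y * w.1, y * w.2) m = y * (dotZ w (ez m) : ℝ) := by
  simp only [wt, dotZ, ez]; push_cast; ring

lemma dw_scale {f : P2} (hf : QuasiConvenient f) {y : ℝ} (hy : 0 < y) {w : ℤ × ℤ}
    (hw : 0 < w.1 ∨ 0 < w.2) : dw (y * w.1, y * w.2) f = y * (hA f w : ℝ) := by
  obtain ⟨m, hm, e⟩ := hA_att hf hw
  refine IsGreatest.csSup_eq ⟨⟨m, by simpa using hm, by rw [wt_scale, e]⟩, ?_⟩
  rintro _ ⟨k, hk, rfl⟩
  rw [wt_scale]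
  have := wle_hA f w k (by simpa using hk)
  have : ((dotZ w (ez k) : ℤ) : ℝ) ≤ hA f w := by exact_mod_cast this
  gcongr

lemma coeff_initForm (w : ℝ × ℝ) (f : P2) (k : Fin 2 →₀ ℕ) :
    coeff k (initForm w f) = if wt w k = dw w f then coeff k f else 0 := by
  classical
  rw [initForm, coeff_sum]
  by_cases hk : coeff k f = 0
  · rw [Finset.sum_eq_zero]
    · simp [hk]
    · intro m hm
      split_ifs
      · rw [coeff_monomial, if_neg]
        rintro rfl
        exact (mem_support_iff.1 hm) hk
      · simp
  · rw [Finset.sum_eq_single k]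
    · split_ifs <;> simp
    · intro m hm hne
      split_ifs
      · rw [coeff_monomial, if_neg hne]
      · simp
    · intro h; exact absurd (mem_support_iff.2 hk) h

lemma initForm_scale {f : P2} (hf : QuasiConvenient f) {y : ℝ} (hy : 0 < y) {w : ℤ × ℤ}
    (hw : 0 < w.1 ∨ 0 < w.2) : initForm (y * w.1, y * w.2) f = tp w (hA f w) f := by
  ext k
  rw [coeff_initForm, coeff_tp, dw_scale hf hy hw, wt_scale]
  have : y * ((dotZ w (ez k) : ℤ) : ℝ) = y * (hA f w : ℝ) ↔ dotZ w (ez k) = hA f w := by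
    rw [mul_right_inj' hy.ne']; exact_mod_cast Iff.rfl
  simp only [this]

lemma initForm_ray {f : P2} (hf : QuasiConvenient f) {w : ℝ × ℝ}
    {x y : ℂ} (hx : x ≠ 0) (hy : y ≠ 0) (h : eval ![x, y] (initForm w f) = 0) :
    ∃ m1 m2, m1 ≠ m2 ∧ coeff m1 f ≠ 0 ∧ coeff m2 f ≠ 0 ∧ wt w m1 = wt w m2 := by
  have hne : (f.support : Set (Fin 2 →₀ ℕ)).Nonempty := by
    obtain ⟨⟨a, ha⟩, -⟩ := hf
    exact ⟨_, by simpa using ha⟩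
  have hmem : dw w f ∈ wt w '' (f.support : Set (Fin 2 →₀ ℕ)) :=
    (hne.image _).csSup_mem (f.support.finite_toSet.image _)
  obtain ⟨m1, hm1, e1⟩ := hmem
  have hm1' : coeff m1 f ≠ 0 := by simpa using hm1
  by_contra hc
  push Not at hc
  have : initForm w f = monomial m1 (coeff m1 f) := by
    ext k
    rw [coeff_initForm, coeff_monomial]
    by_cases hk : m1 = k
    · subst hk; simp [e1]
    · rw [if_neg hk]
      split_ifs with h1
      · by_contra h2
        exact hc m1 k hk hm1' h2 (by rw [h1, e1])
      · rfl
  rw [this, eval_monomial] at h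
  rcases mul_eq_zero.1 h with h | h
  · exact hm1' h
  · rw [Finsupp.prod, Finset.prod_eq_zero_iff] at h
    obtain ⟨i, -, hi⟩ := h
    have hi' := eq_zero_of_pow_eq_zero hi
    fin_cases i
    · exact hx hi'
    · exact hy hi'

lemma pairNondeg_iff {f g : P2} (hf : QuasiConvenient f) (hg : QuasiConvenient g) (n : ℕ)
    (n1 : ∀ β ∈ S0 f, ∀ β' ∈ S0 f, |β.1 - β'.1| + |β.2 - β'.2| ≤ (n : ℤ)) :
    (∀ w ∈ Rp n, ¬ ∃ x y : ℂ, x ≠ 0 ∧ y ≠ 0 ∧ eval ![x, y] (tp w (hA f w) f) = 0 ∧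
      eval ![x, y] (tp w (hA g w) g) = 0) ↔ PairNondegAtInf f g := by
  constructor
  · rintro H w hw ⟨x, y, hx, hy, h1, h2⟩
    obtain ⟨m1, m2, hne, c1, c2, e⟩ := initForm_ray hf hx hy h1
    obtain ⟨r, hr, w', hw', -, rfl⟩ := ray_real n w (ez m1 - ez m2)
      (sub_ne_zero.2 fun h => hne (ez_inj h))
      (n1 _ ((mem_S0 f _).2 (Or.inr ⟨m1, mem_support_iff.2 c1, rfl⟩)) _
        ((mem_S0 f _).2 (Or.inr ⟨m2, mem_support_iff.2 c2, rfl⟩)))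
      (by simp only [wt] at e; simp only [ez, Prod.fst_sub, Prod.snd_sub]; push_cast; linarith) hw
    have hwp : 0 < w'.1 ∨ 0 < w'.2 := by
      rcases hw with hw | hw
      · left; exact_mod_cast (mul_pos_iff_of_pos_left hr).1 hw
      · right; exact_mod_cast (mul_pos_iff_of_pos_left hr).1 hw
    rw [initForm_scale hf hr hwp] at h1
    rw [initForm_scale hg hr hwp] at h2
    exact H w' (Finset.mem_filter.2 ⟨hw', hwp⟩) ⟨x, y, hx, hy, h1, h2⟩
  · rintro H w hw ⟨x, y, hx, hy, h1, h2⟩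
    have hwp := (Finset.mem_filter.1 hw).2
    rw [← initForm_scale hf one_pos hwp] at h1
    rw [← initForm_scale hg one_pos hwp] at h2
    refine H _ ?_ ⟨x, y, hx, hy, h1, h2⟩
    rcases hwp with h | h
    · left; simpa using h
    · right; simpa using h

lemma mIdeal_inj : Function.Injective mIdeal := by
  rintro ⟨a, b⟩ ⟨c, d⟩ h
  have h1 : (X 0 - C a : P2) ∈ mIdeal (c, d) := by
    rw [← h]; simp [mIdeal, RingHom.mem_ker]
  have h2 : (X 1 - C b : P2) ∈ mIdeal (c, d) := by
    rw [← h]; simp [mIdeal, RingHom.mem_ker]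
  simp [mIdeal, RingHom.mem_ker, sub_eq_zero] at h1 h2
  rw [h1, h2]

lemma exists_mIdeal (I : Ideal P2) (hI : I.IsMaximal) : ∃ Pt, mIdeal Pt = I := by
  obtain ⟨x, hx⟩ := isMaximal_iff_eq_vanishingIdeal_singleton.1 hI
  refine ⟨(x 0, x 1), ?_⟩
  rw [hx]
  ext p
  have ex : x = ![x 0, x 1] := by ext i; fin_cases i <;> rfl
  rw [mem_vanishingIdeal_singleton_iff, mIdeal, RingHom.mem_ker, aeval_eq_eval, ← ex]

lemma interMult_eq_zero {f g : P2} {Pt : ℂ × ℂ} (h : ¬ Ideal.span {f, g} ≤ mIdeal Pt) :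
    interMult f g Pt = 0 := by
  have : Ideal.span {algebraMap P2 (Localization.AtPrime (mIdeal Pt)) f,
                  algebraMap P2 (Localization.AtPrime (mIdeal Pt)) g} = ⊤ := by
    obtain ⟨r, hr, hr'⟩ := SetLike.not_le_iff_exists.1 h
    rw [← Set.image_pair, ← Ideal.map_span]
    refine Ideal.eq_top_of_isUnit_mem _ (Ideal.mem_map_of_mem _ hr) ?_
    exact IsLocalization.map_units (M := (mIdeal Pt).primeCompl) _ ⟨r, hr'⟩
  rw [interMult]
  have : Subsingleton (Localization.AtPrime (mIdeal Pt) ⧸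
      Ideal.span {algebraMap P2 (Localization.AtPrime (mIdeal Pt)) f,
                  algebraMap P2 (Localization.AtPrime (mIdeal Pt)) g}) :=
    Ideal.Quotient.subsingleton_iff.2 this
  exact Module.finrank_zero_of_subsingleton

lemma interMult_eq {f g : P2} {Pt : ℂ × ℂ} (p : Ideal (P2 ⧸ Ideal.span {f, g})) [p.IsPrime]
    (hp : mIdeal Pt = p.comap (Ideal.Quotient.mk (Ideal.span {f, g}))) :
    interMult f g Pt = Module.finrank ℂ (Localization.AtPrime p) := by
  rw [interMult, ← Set.image_pair, ← Ideal.map_span]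
  have hs : Algebra.algebraMapSubmonoid (P2 ⧸ Ideal.span {f, g}) (mIdeal Pt).primeCompl =
      p.primeCompl := by
    ext x
    obtain ⟨x, rfl⟩ := Ideal.Quotient.mk_surjective x
    constructor
    · rintro ⟨y, hy, e⟩
      rw [← e]
      intro h
      apply hy
      rw [hp]
      exact h
    · intro h
      refine ⟨x, ?_, rfl⟩
      intro h'
      rw [hp] at h'
      exact h h'
  have hl : IsLocalization (Algebra.algebraMapSubmonoid (P2 ⧸ Ideal.span {f, g})
      (mIdeal Pt).primeCompl) (Localization.AtPrime (mIdeal Pt) ⧸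
        (Ideal.span {f, g}).map (algebraMap P2 (Localization.AtPrime (mIdeal Pt)))) :=
    inferInstance
  rw [hs] at hl
  let e := IsLocalization.algEquiv p.primeCompl (Localization.AtPrime (mIdeal Pt) ⧸
        (Ideal.span {f, g}).map (algebraMap P2 (Localization.AtPrime (mIdeal Pt))))
        (Localization.AtPrime p)
  have : IsScalarTower ℂ (P2 ⧸ Ideal.span {f, g}) (Localization.AtPrime (mIdeal Pt) ⧸
        (Ideal.span {f, g}).map (algebraMap P2 (Localization.AtPrime (mIdeal Pt)))) :=
    ⟨fun a b c => by
      obtain ⟨b, rfl⟩ := Ideal.Quotient.mk_surjective b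
      obtain ⟨c, rfl⟩ := Ideal.Quotient.mk_surjective c
      have h : (a • b) • c = a • (b • c) := smul_assoc a b c
      rw [Algebra.smul_def, Algebra.smul_def b c] at h
      have h2 := congrArg (Ideal.Quotient.mk ((Ideal.span {f, g}).map
        (algebraMap P2 (Localization.AtPrime (mIdeal Pt))))) h
      rw [map_mul] at h2
      refine (Algebra.smul_def _ _).trans (h2.trans ?_)
      have h3 : Ideal.Quotient.mk ((Ideal.span {f, g}).map
        (algebraMap P2 (Localization.AtPrime (mIdeal Pt)))) (algebraMap P2 _ b * c) =
        (Ideal.Quotient.mk (Ideal.span {f, g}) b) • (Ideal.Quotient.mk ((Ideal.span {f, g}).map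
        (algebraMap P2 (Localization.AtPrime (mIdeal Pt)))) c) := by
        rw [Algebra.smul_def, map_mul]; rfl
      rw [← h3]
      rfl⟩
  exact (e.restrictScalars ℂ).toLinearEquiv.finrank_eq

lemma sum_interMult {f g : P2} (hfin : Module.Finite ℂ (P2 ⧸ Ideal.span {f, g})) :
    (∑ᶠ Pt : ℂ × ℂ, (interMult f g Pt : ℝ)) = Module.finrank ℂ (P2 ⧸ Ideal.span {f, g}) := by
  have hart : IsArtinianRing (P2 ⧸ Ideal.span {f, g}) := IsArtinianRing.of_finite ℂ _
  have hFt : Fintype (PrimeSpectrum (P2 ⧸ Ideal.span {f, g})) := Fintype.ofFinite _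
  have hex : ∀ p : PrimeSpectrum (P2 ⧸ Ideal.span {f, g}), ∃ Pt,
      mIdeal Pt = p.asIdeal.comap (Ideal.Quotient.mk (Ideal.span {f, g})) := by
    intro p
    have : p.asIdeal.IsMaximal := inferInstance
    exact exists_mIdeal _ (Ideal.comap_isMaximal_of_surjective _ Ideal.Quotient.mk_surjective)
  choose φ hφ using hex
  have hinj : Function.Injective φ := by
    intro p q h
    have := hφ p
    rw [h, hφ q] at this
    exact PrimeSpectrum.ext (Ideal.comap_injective_of_surjective _ Ideal.Quotient.mk_surjective
      this.symm)
  rw [IsArtinianRing.finrank_eq_sum_primeSpectrum]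
  rw [← finsum_mem_univ, ← finsum_mem_inter_support_eq'
    (f := fun Pt => (interMult f g Pt : ℝ)) (s := Set.range φ)]
  · rw [finsum_mem_range hinj, finsum_eq_sum_of_fintype]
    push_cast
    exact Finset.sum_congr rfl fun p _ => by rw [interMult_eq p.asIdeal (hφ p)]
  · intro Pt hPt
    simp only [Set.mem_univ, iff_true]
    by_contra hc
    apply hPt
    simp only [Nat.cast_eq_zero]
    refine interMult_eq_zero fun hle => hc ?_
    have hpr : (Ideal.map (Ideal.Quotient.mk (Ideal.span {f, g})) (mIdeal Pt)).IsPrime :=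
      Ideal.map_isPrime_of_surjective Ideal.Quotient.mk_surjective (by simpa using hle)
    refine ⟨⟨_, hpr⟩, mIdeal_inj ?_⟩
    rw [hφ]
    simp only
    rw [Ideal.comap_map_of_surjective _ Ideal.Quotient.mk_surjective,
      ← RingHom.ker_eq_comap_bot, Ideal.mk_ker]
    simpa using hle

/-- Kouchnirenko–Bernstein theorem, equality case. -/
theorem stmt13 (f g : P2) (hf : QuasiConvenient f) (hg : QuasiConvenient g)
    (hco : CoprimeDiv f g) :
    (∑ᶠ Pt : ℂ × ℂ, (interMult f g Pt : ℝ)) = nuInf f g ↔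
      PairNondegAtInf f g := by
  obtain ⟨a, ha⟩ := exists_diam f
  obtain ⟨b, hb⟩ := exists_diam g
  obtain ⟨c, hc⟩ := exists_diam (f * g)
  have n1 := ha (a + b + c) (by omega)
  have n2 := hb (a + b + c) (by omega)
  have n3 := hc (a + b + c) (by omega)
  rw [sum_interMult (Vt_filt hf hg hco _ n1 n2 n3).1, main_lattice hf hg hco _ n1 n2 n3,
    pairNondeg_iff hf hg _ n1]
end
end

section
/- The polynomial f(X,Y) = Y + X² + XY³ + X³Y⁴ + X⁵Y³ is nearly irreducible. -/
open MvPolynomial MeasureTheory Pointwise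

noncomputable section

namespace Stmt17Aux

open Polynomial in
lemma fac_pow {a b : ℂ[X]} {n : ℕ} (h : a * b = Polynomial.X ^ n) :
    ∃ i j : ℕ, ∃ s t : ℂ, i + j = n ∧ s * t = 1 ∧
      a = Polynomial.C s * Polynomial.X ^ i ∧ b = Polynomial.C t * Polynomial.X ^ j := by
  have hd : a ∣ Polynomial.X ^ n := ⟨b, h.symm⟩
  obtain ⟨i, hi, hai⟩ := (dvd_prime_pow Polynomial.prime_X n).1 hd
  obtain ⟨u, hu⟩ := hai.symm
  obtain ⟨s, hs, hsu⟩ := Polynomial.isUnit_iff.1 u.isUnit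
  have hs0 : s ≠ 0 := hs.ne_zero
  have ha : a = Polynomial.C s * Polynomial.X ^ i := by rw [← hu, ← hsu, mul_comm]
  refine ⟨i, n - i, s, s⁻¹, by omega, mul_inv_cancel₀ hs0, ha, ?_⟩
  have ha0 : a ≠ 0 := by
    rw [ha]
    exact mul_ne_zero (by simpa using hs0) (pow_ne_zero _ Polynomial.X_ne_zero)
  apply mul_left_cancel₀ ha0
  rw [h, ha]
  have h1 : (Polynomial.C s * Polynomial.C s⁻¹ : ℂ[X]) = 1 := by
    rw [← Polynomial.C_mul, mul_inv_cancel₀ hs0, Polynomial.C_1]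
  have h2 : (Polynomial.X ^ n : ℂ[X]) = Polynomial.X ^ i * Polynomial.X ^ (n - i) := by
    rw [← pow_add]; congr 1; omega
  rw [h2]
  linear_combination (-(Polynomial.X ^ i * Polynomial.X ^ (n - i))) * h1

open Polynomial in
lemma case22 {a1 a2 b1 b2 : ℂ[X]} (h4 : a2 * b2 = Polynomial.X ^ 3)
    (h3 : a2 * b1 + a1 * b2 = Polynomial.X + Polynomial.X ^ 5)
    (h2 : a2 + a1 * b1 + Polynomial.X ^ 2 * b2 = 0)
    (h1 : a1 + Polynomial.X ^ 2 * b1 = 1) : False := by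
  obtain ⟨i, j, s, t, hij, hst, rfl, rfl⟩ := fac_pow h4
  have hs : s ≠ 0 := left_ne_zero_of_mul_eq_one hst
  have ht : t ≠ 0 := right_ne_zero_of_mul_eq_one hst
  obtain rfl : a1 = 1 - Polynomial.X ^ 2 * b1 := by linear_combination h1
  have e2 := congrArg (Polynomial.eval 0) h2
  have e3 := congrArg (Polynomial.eval 0) h3
  have hi : i = 0 ∨ i = 1 ∨ i = 2 ∨ i = 3 := by omega
  rcases hi with rfl | rfl | rfl | rfl
  · obtain rfl : j = 3 := by omega
    simp at e2 e3
    rcases e3 with h | h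
    · exact hs h
    · rw [h] at e2; simp at e2; exact hs e2
  · obtain rfl : j = 2 := by omega
    have h5 : Polynomial.C s * b1 + (1 - Polynomial.X ^ 2 * b1) * Polynomial.C t * Polynomial.X
        = 1 + Polynomial.X ^ 4 := by
      apply mul_left_cancel₀ (Polynomial.X_ne_zero (R := ℂ))
      linear_combination h3
    have e5 := congrArg (Polynomial.eval 0) h5
    simp at e2 e5
    rw [e2] at e5; simp at e5
  · obtain rfl : j = 1 := by omega
    have h5 : Polynomial.C s * b1 * Polynomial.X +
        (1 - Polynomial.X ^ 2 * b1) * Polynomial.C t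
        = 1 + Polynomial.X ^ 4 := by
      apply mul_left_cancel₀ (Polynomial.X_ne_zero (R := ℂ))
      linear_combination h3
    have e5 := congrArg (Polynomial.eval 0) h5
    simp at e5
    subst e5
    obtain rfl : s = 1 := by simpa using hst
    have e6 := congrArg (Polynomial.eval 1) h5
    simp at e6
  · obtain rfl : j = 0 := by omega
    simp at e3
    exact ht e3

open Polynomial in
lemma case13 {a0 a1 b0 b1 b2 b3 : ℂ[X]} (h4 : a1 * b3 = Polynomial.X ^ 3)
    (h3 : a1 * b2 + a0 * b3 = Polynomial.X + Polynomial.X ^ 5)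
    (h2 : a1 * b1 + a0 * b2 = 0)
    (h1 : a1 * b0 + a0 * b1 = 1)
    (h0 : a0 * b0 = Polynomial.X ^ 2) : False := by
  have key : Polynomial.X ^ 3 * a0 ^ 4 - (Polynomial.X + Polynomial.X ^ 5) * a0 ^ 3 * a1
      - a0 * a1 ^ 3 + Polynomial.X ^ 2 * a1 ^ 4 = 0 := by
    rw [← h4, ← h3, ← h0]
    linear_combination (a0 * a1 ^ 3) * h1 - a0 ^ 2 * a1 ^ 2 * h2
  obtain ⟨i, j, s, t, hij, hst, ha1, -⟩ := fac_pow h4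
  obtain ⟨k, l, u, v, hkl, huv, ha0, -⟩ := fac_pow h0
  have hs : s ≠ 0 := left_ne_zero_of_mul_eq_one hst
  have hu : u ≠ 0 := left_ne_zero_of_mul_eq_one huv
  have key2 : Polynomial.C (u ^ 4) * Polynomial.X ^ (3 + 4 * k)
      - Polynomial.C (u ^ 3 * s) * Polynomial.X ^ (1 + 3 * k + i)
      - Polynomial.C (u ^ 3 * s) * Polynomial.X ^ (5 + 3 * k + i)
      - Polynomial.C (u * s ^ 3) * Polynomial.X ^ (k + 3 * i)
      + Polynomial.C (s ^ 4) * Polynomial.X ^ (2 + 4 * i) = 0 := by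
    rw [ha0, ha1] at key
    simp only [map_mul, map_pow]
    linear_combination key
  have hc : ∀ n, (Polynomial.coeff _ n : ℂ) = _ := fun n =>
    congrArg (fun p => Polynomial.coeff p n) key2
  simp only [Polynomial.coeff_add, Polynomial.coeff_sub, Polynomial.coeff_C_mul,
    Polynomial.coeff_X_pow, Polynomial.coeff_zero] at hc
  have hi : i ≤ 3 := by omega
  have hk : k ≤ 2 := by omega
  -- isolated exponent
  have n1 := hc (3 + 4 * k)
  have n2 := hc (1 + 3 * k + i)
  have n3 := hc (k + 3 * i)
  have n4 := hc (2 + 4 * i)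
  clear hc key key2
  interval_cases i <;> interval_cases k <;> simp_all

open Polynomial in
lemma main_fac_le {A B : ℂ[X][X]} (h : A * B = Polynomial.X + Polynomial.C (Polynomial.X ^ 2)
      + Polynomial.C Polynomial.X * Polynomial.X ^ 3
      + Polynomial.C (Polynomial.X ^ 3) * Polynomial.X ^ 4
      + Polynomial.C (Polynomial.X ^ 5) * Polynomial.X ^ 3)
    (hle : A.natDegree ≤ B.natDegree) : IsUnit A := by
  have hdeg : (A * B).natDegree = 4 := by
    rw [h]
    have h1 : (Polynomial.X + Polynomial.C (Polynomial.X ^ 2)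
      + Polynomial.C Polynomial.X * Polynomial.X ^ 3
      + Polynomial.C (Polynomial.X ^ 3) * Polynomial.X ^ 4
      + Polynomial.C (Polynomial.X ^ 5) * Polynomial.X ^ 3 : ℂ[X][X]).natDegree ≤ 4 := by
      compute_degree
    apply le_antisymm h1
    apply Polynomial.le_natDegree_of_ne_zero
    simp [Polynomial.coeff_X, -map_pow, Polynomial.coeff_C]
  have hAB : A * B ≠ 0 := by intro h0; rw [h0] at hdeg; simp at hdeg
  rw [Polynomial.natDegree_mul (left_ne_zero_of_mul hAB) (right_ne_zero_of_mul hAB)] at hdeg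
  have hA : ∀ n, A.natDegree < n → A.coeff n = 0 :=
    fun n hn => Polynomial.coeff_eq_zero_of_natDegree_lt hn
  have hB : ∀ n, B.natDegree < n → B.coeff n = 0 :=
    fun n hn => Polynomial.coeff_eq_zero_of_natDegree_lt hn
  have c0 := congrArg (fun p => Polynomial.coeff p 0) h
  have c1 := congrArg (fun p => Polynomial.coeff p 1) h
  have c2 := congrArg (fun p => Polynomial.coeff p 2) h
  have c3 := congrArg (fun p => Polynomial.coeff p 3) h
  have c4 := congrArg (fun p => Polynomial.coeff p 4) h
  simp [Polynomial.coeff_mul, Finset.Nat.antidiagonal_succ, Polynomial.coeff_X, -map_pow,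
    Polynomial.coeff_C] at c0 c1 c2 c3 c4
  have hcases : A.natDegree = 0 ∨ A.natDegree = 1 ∨ A.natDegree = 2 := by omega
  rcases hcases with hd | hd | hd
  · rw [Polynomial.eq_C_of_natDegree_eq_zero hd, Polynomial.isUnit_C]
    rw [hA 1 (by omega)] at c1
    exact IsUnit.of_mul_eq_one (B.coeff 1) (by simpa using c1)
  · exfalso
    have z2 := hA 2 (by omega)
    have z3 := hA 3 (by omega)
    have z4 := hA 4 (by omega)
    have w4 := hB 4 (by omega)
    simp only [z2, z3, z4, w4, zero_mul, mul_zero, add_zero, zero_add] at c2 c3 c4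
    exact case13 (a0 := A.coeff 0) (a1 := A.coeff 1) (b0 := B.coeff 0) (b1 := B.coeff 1)
      (b2 := B.coeff 2) (b3 := B.coeff 3) (by linear_combination c4) (by linear_combination c3)
      (by linear_combination c2) (by linear_combination c1) (by linear_combination c0)
  · exfalso
    have z3 := hA 3 (by omega)
    have z4 := hA 4 (by omega)
    have w3 := hB 3 (by omega)
    have w4 := hB 4 (by omega)
    simp only [z3, z4, w3, w4, zero_mul, mul_zero, add_zero, zero_add] at c2 c3 c4
    obtain ⟨i, j, s, t, hij, hst, ha, hb⟩ := fac_pow c0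
    have hC : (Polynomial.C s * Polynomial.C t : ℂ[X]) = 1 := by
      rw [← Polynomial.C_mul, hst, Polynomial.C_1]
    have hi : i = 0 ∨ i = 1 ∨ i = 2 := by omega
    rw [ha, hb] at c1 c2
    rcases hi with rfl | rfl | rfl
    · obtain rfl : j = 2 := by omega
      refine case22 (a1 := Polynomial.C s * B.coeff 1) (a2 := Polynomial.C s * B.coeff 2)
        (b1 := Polynomial.C t * A.coeff 1) (b2 := Polynomial.C t * A.coeff 2) ?_ ?_ ?_ ?_
      · linear_combination c4 + (A.coeff 2 * B.coeff 2) * hC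
      · linear_combination c3 + (A.coeff 2 * B.coeff 1 + A.coeff 1 * B.coeff 2) * hC
      · linear_combination c2 + (A.coeff 1 * B.coeff 1) * hC
      · linear_combination c1
    · obtain rfl : j = 1 := by omega
      have := congrArg (Polynomial.eval 0) c1
      simp at this
    · obtain rfl : j = 0 := by omega
      refine case22 (a1 := Polynomial.C t * A.coeff 1) (a2 := Polynomial.C t * A.coeff 2)
        (b1 := Polynomial.C s * B.coeff 1) (b2 := Polynomial.C s * B.coeff 2) ?_ ?_ ?_ ?_
      · linear_combination c4 + (A.coeff 2 * B.coeff 2) * hC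
      · linear_combination c3 + (A.coeff 2 * B.coeff 1 + A.coeff 1 * B.coeff 2) * hC
      · linear_combination c2 + (A.coeff 1 * B.coeff 1) * hC
      · linear_combination c1

/-- View a polynomial in two variables as an element of `ℂ[X][Y]`. -/
def toPoly : P2 →ₐ[ℂ] Polynomial (Polynomial ℂ) :=
  MvPolynomial.aeval ![Polynomial.C Polynomial.X, Polynomial.X]

/-- Back from `ℂ[X][Y]` to polynomials in two variables. -/
def ofPoly : Polynomial (Polynomial ℂ) →+* P2 :=
  Polynomial.eval₂RingHom
    (Polynomial.eval₂RingHom (MvPolynomial.C : ℂ →+* P2) (MvPolynomial.X 0)) (MvPolynomial.X 1)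

lemma ofPoly_toPoly (g : P2) : ofPoly (toPoly g) = g := by
  have : (ofPoly.comp toPoly.toRingHom) = RingHom.id P2 := by
    apply MvPolynomial.ringHom_ext
    · intro r
      simp [ofPoly, toPoly, Polynomial.algebraMap_apply]
    · intro i
      fin_cases i <;> simp [ofPoly, toPoly]
  exact congrArg (fun φ : P2 →+* P2 => φ g) this

lemma isUnit_of_toPoly {g : P2} (h : IsUnit (toPoly g)) : IsUnit g := by
  have := h.map ofPoly
  rwa [ofPoly_toPoly] at this

lemma unit_or {g k : P2} (h : g * k = (X 1 : P2) + X 0 ^ 2 + X 0 * X 1 ^ 3 + X 0 ^ 3 * X 1 ^ 4 +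
        X 0 ^ 5 * X 1 ^ 3) : IsUnit g ∨ IsUnit k := by
  have h1 := congrArg toPoly h
  rw [map_mul] at h1
  have h2 : toPoly ((X 1 : P2) + X 0 ^ 2 + X 0 * X 1 ^ 3 + X 0 ^ 3 * X 1 ^ 4 +
        X 0 ^ 5 * X 1 ^ 3) = Polynomial.X + Polynomial.C (Polynomial.X ^ 2)
      + Polynomial.C Polynomial.X * Polynomial.X ^ 3
      + Polynomial.C (Polynomial.X ^ 3) * Polynomial.X ^ 4
      + Polynomial.C (Polynomial.X ^ 5) * Polynomial.X ^ 3 := by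
    simp [toPoly]
  rw [h2] at h1
  rcases le_total (toPoly g).natDegree (toPoly k).natDegree with hl | hl
  · exact Or.inl (isUnit_of_toPoly (main_fac_le h1 hl))
  · exact Or.inr (isUnit_of_toPoly (main_fac_le (by rw [mul_comm]; exact h1) hl))

lemma totalDegree_of_isUnit {g : P2} (h : IsUnit g) : g.totalDegree = 0 := by
  obtain ⟨k, hk⟩ := h.exists_right_inv
  have hgk : g * k ≠ 0 := by rw [hk]; exact one_ne_zero
  have := MvPolynomial.totalDegree_mul_of_isDomain (left_ne_zero_of_mul hgk)
    (right_ne_zero_of_mul hgk)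
  rw [hk, MvPolynomial.totalDegree_one] at this
  omega

lemma vanish {g : P2} (h : g ∣ (X 1 : P2) + X 0 ^ 2 + X 0 * X 1 ^ 3 + X 0 ^ 3 * X 1 ^ 4 +
        X 0 ^ 5 * X 1 ^ 3) (hg : 0 < g.totalDegree) : eval ![(0 : ℂ), 0] g = 0 := by
  obtain ⟨k, hk⟩ := h
  have h0 := congrArg (eval ![(0 : ℂ), 0]) hk
  simp at h0
  rcases h0 with h0 | h0
  · exact h0
  · exfalso
    rcases unit_or hk.symm with hu | hu
    · rw [totalDegree_of_isUnit hu] at hg; exact lt_irrefl _ hg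
    · have := hu.map (eval ![(0 : ℂ), 0])
      rw [h0] at this
      simp at this

end Stmt17Aux

/-- Example 3: `Y + X² + XY³ + X³Y⁴ + X⁵Y³` is nearly irreducible. -/
theorem stmt17 :
    NearlyIrreducible
      ((X 1 : P2) + X 0 ^ 2 + X 0 * X 1 ^ 3 + X 0 ^ 3 * X 1 ^ 4 +
        X 0 ^ 5 * X 1 ^ 3) := by
  refine ⟨?_, fun g h hg hh hgd hhd =>
    ⟨0, 0, Stmt17Aux.vanish hg hgd, Stmt17Aux.vanish hh hhd⟩⟩
  by_contra hcon
  have h0 := Nat.eq_zero_of_not_pos hcon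
  rw [MvPolynomial.totalDegree_eq_zero_iff_eq_C] at h0
  have e0 := congrArg (eval ![(0 : ℂ), 0]) h0
  have e1 := congrArg (eval ![(0 : ℂ), 1]) h0
  rw [MvPolynomial.eval_C] at e0 e1
  rw [← e0] at e1
  simp at e1
end
end
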